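/- There exist a real number ε with 0 < ε < 1/2 and an integer Δ₀ such that the following holds for every integer Δ ≥ Δ₀ and every finite simple graph G with maximum degree Δ and no isolated edge. Set d := ⌈(1/2 − ε)Δ⌉, and call a vertex big if its degree in G is at least d and small otherwise. Then G has a proper edge colouring c using at most Δ + 19 colours such that: (i) S_c(u) ≠ S_c(v) for every edge uv whose endpoints are both big; and (ii) S_c(u) ≠ S_c(v) for every edge uv whose endpoints are both small and such that every vertex of (N(u) ∪ N(v)) − {u, v} is big. -/

import Mathlib

/-- A proper edge colouring: distinct incident edges of `G` get distinct colours. -/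
def ProperEdgeColoring {V : Type*} (G : SimpleGraph V) (c : Sym2 V → ℕ) : Prop :=
  ∀ e₁ ∈ G.edgeSet, ∀ e₂ ∈ G.edgeSet, e₁ ≠ e₂ → (∃ v, v ∈ e₁ ∧ v ∈ e₂) → c e₁ ≠ c e₂

/-- `colorSet G c u` is the set of colours appearing on edges incident to `u`. -/
def colorSet {V : Type*} (G : SimpleGraph V) (c : Sym2 V → ℕ) (u : V) : Set ℕ :=
  {n | ∃ v, G.Adj u v ∧ c s(u, v) = n}

/-!
Contract every edge whose endpoints are small and whose other neighbours are all big. The resulting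
multigraph has maximum degree at most `Δ`, because small vertices have degree at most `Δ / 2`, and
multiplicity at most `2`, so by Vizing's theorem it has an edge colouring with `Δ + 2` colours.
Pulled back to `G`, this colouring gives the two endpoints `u`, `v` of a contracted edge disjoint
colour sets outside `uv`.

Every big vertex now picks two of its edges, which are recoloured with `17` new colours. If each
vertex is picked by others at most `14` times, the picked edges form a graph of maximum degree `16`,
and `17` colours suffice by Vizing's theorem. A colour set then determines the old colours of the
unpicked edges at the vertex. For these to agree at adjacent vertices `u`, `v` with `u` big, the
colour of each pick at `u` must be absent from the edges at `v` other than `uv`, or be the colour of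
a picked edge at `v`. Such coincidences are patterns of `2`, `3` or `4` picks, and a vertex picked
too often is a pattern of `15` picks. As each pick has about `Δ / 2` options, a counting argument in
the style of Rosenfeld yields picks avoiding all patterns: if each vertex added multiplies the
number of good choices by at least `β`, a given pattern of `k + 1` picks involving the next vertex
spoils at most `1 / β ^ k` times the number of choices made so far. A contracted edge `uv` keeps
distinct colour sets because an outer edge at `u` or at `v` stays unpicked.
-/

namespace AVD

open Finset Function

/-! ### Vizing's theorem for multigraphs -/

section Recoloring

variable {V κ : Type*}

lemma dvd_sub_of_dvd_two_mul {p a b : ℤ} (ha : p ∣ 2 * a) (hb : p ∣ 2 * b)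
    (hpa : ¬p ∣ a) (hpb : ¬p ∣ b) : p ∣ a - b := by
  have odd_quotient : ∀ {n r : ℤ}, 2 * n = p * r → ¬p ∣ n → Odd r := by
    intro n r hr hn
    by_contra hodd
    obtain ⟨q, rfl⟩ := Int.not_odd_iff_even.1 hodd
    exact hn ⟨q, by linarith⟩
  obtain ⟨r, hr⟩ := ha
  obtain ⟨q, hq⟩ := hb
  obtain ⟨t, ht⟩ := (odd_quotient hr hpa).sub_odd (odd_quotient hq hpb)
  have hsub : 2 * (a - b) = p * (r - q) := by linarith
  exact ⟨t, by rw [ht] at hsub; linarith⟩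

lemma apply_zpow_mul_of_fixed {f g : Equiv.Perm V} (hf : Involutive f) (hg : Involutive g) {u : V}
    (hu : f u = u) (n : ℤ) : f (((f * g) ^ n) u) = ((f * g) ^ (-n)) u := by
  have hf_inv : f⁻¹ = f := Equiv.ext fun x => Equiv.Perm.inv_eq_iff_eq.2 (hf x).symm
  have hg_inv : g⁻¹ = g := Equiv.ext fun x => Equiv.Perm.inv_eq_iff_eq.2 (hg x).symm
  have hconj : f * (f * g) * f⁻¹ = (f * g)⁻¹ := by
    rw [mul_inv_rev, hf_inv, hg_inv]
    exact Equiv.ext fun x => hf _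
  rw [zpow_neg, ← inv_zpow, ← hconj, conj_zpow, hf_inv, Equiv.Perm.mul_apply, Equiv.Perm.mul_apply,
    hu]

/- Writing `t = f * g`, the cycle of `t` through `u` is `{t ^ n u}` and `f` acts on it by `n ↦ -n`,
so the point `t ^ n u` is fixed only if `t ^ (2 * n)` fixes `u`. -/
lemma exists_closed_set_of_involutive {f g : V → V} (hf : Involutive f) (hg : Involutive g) {u : V}
    (hu : f u = u) :
    ∃ C : Set V, u ∈ C ∧ (∀ x ∈ C, f x ∈ C) ∧ (∀ x ∈ C, g x ∈ C) ∧
      ∀ x ∈ C, ∀ y ∈ C, f x = x → f y = y → x ≠ u → y ≠ u → x = y := by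
  set t : Equiv.Perm V := hf.toPerm * hg.toPerm with ht
  have reflect : ∀ n : ℤ, f ((t ^ n) u) = (t ^ (-n)) u :=
    apply_zpow_mul_of_fixed (f := hf.toPerm) (g := hg.toPerm) hf hg hu
  have fixes_iff : ∀ n : ℤ, (t ^ n) u = u ↔ (minimalPeriod (t • ·) u : ℤ) ∣ n :=
    fun n => MulAction.zpow_smul_eq_iff_minimalPeriod_dvd (a := t) (b := u) (n := n)
  have dvd_two_mul : ∀ n : ℤ, f ((t ^ n) u) = (t ^ n) u →
      (minimalPeriod (t • ·) u : ℤ) ∣ 2 * n := by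
    intro n hn
    rw [reflect, zpow_neg, Equiv.Perm.inv_eq_iff_eq] at hn
    rw [← fixes_iff, two_mul, zpow_add, Equiv.Perm.mul_apply, ← hn]
  have closed : ∀ x, t.SameCycle u x → t.SameCycle u (f x) := by
    rintro x ⟨n, rfl⟩
    exact ⟨-n, (reflect n).symm⟩
  refine ⟨{x | t.SameCycle u x}, .refl t u, closed, fun x hx => ?_, ?_⟩
  · simpa [ht, hf (g x)] using closed _ (Equiv.Perm.sameCycle_apply_right.2 hx)
  · rintro _ ⟨a, rfl⟩ _ ⟨b, rfl⟩ ha hb hau hbu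
    rw [Ne, fixes_iff] at hau hbu
    have hab := (fixes_iff _).2
      (dvd_sub_of_dvd_two_mul (dvd_two_mul a ha) (dvd_two_mul b hb) hau hbu)
    rw [← add_sub_cancel b a, zpow_add, Equiv.Perm.mul_apply, hab]

/-- The family `s` with the colours permuted by `π x` at each vertex `x`. A colour class (a partial
matching) is encoded by an involution `s c` of the vertices, its unmatched vertices being the fixed
points, so this is the recolouring of the corresponding edge colouring. -/
def recolor (π : V → Equiv.Perm κ) (s : κ → V → V) (c : κ) (x : V) : V := s (π x c) x

/-- Permuting the colours of `K` by `π x` at each vertex `x` turns the matchings `s` into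
matchings. -/
structure IsRecoloring (K : Finset κ) (s : κ → V → V) (π : V → Equiv.Perm κ) : Prop where
  apply_of_notMem : ∀ x, ∀ c ∉ K, π x c = c
  involutive : ∀ c, Involutive (recolor π s c)

namespace IsRecoloring

variable {K : Finset κ} {s : κ → V → V} {π : V → Equiv.Perm κ}

lemma one (hs : ∀ c, Involutive (s c)) : IsRecoloring K s 1 := ⟨fun _ _ _ => rfl, hs⟩

lemma trans {K' : Finset κ} {π' : V → Equiv.Perm κ} (h : IsRecoloring K s π)
    (h' : IsRecoloring K' (recolor π s) π') (hK : K' ⊆ K) : IsRecoloring K s (π * π') where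
  apply_of_notMem x c hc := by
    rw [Pi.mul_apply, Equiv.Perm.mul_apply, h'.apply_of_notMem x c fun hc' => hc (hK hc'),
      h.apply_of_notMem x c hc]
  involutive := h'.involutive

lemma apply_mem_iff (h : IsRecoloring K s π) (x : V) (c : κ) : π x c ∈ K ↔ c ∈ K := by
  refine not_iff_not.1 ⟨fun hc => ?_, fun hc => (h.apply_of_notMem x c hc).symm ▸ hc⟩
  rwa [(π x).injective (h.apply_of_notMem x _ hc)] at hc

lemma card_filter (h : IsRecoloring K s π) (x : V) (p : κ → Prop) [DecidablePred p] :
    #{c ∈ K | p (π x c)} = #{c ∈ K | p c} :=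
  card_equiv (π x) fun c => by simp only [mem_filter, h.apply_mem_iff]

end IsRecoloring

open Classical in
lemma isRecoloring_swap {K : Finset κ} {s : κ → V → V} (hs : ∀ c, Involutive (s c)) {i j : κ}
    (hi : i ∈ K) (hj : j ∈ K) {C : Set V} (hCi : ∀ x ∈ C, s i x ∈ C) (hCj : ∀ x ∈ C, s j x ∈ C) :
    IsRecoloring K s fun x => if x ∈ C then Equiv.swap i j else 1 := by
  refine ⟨fun x c hc => ?_, fun c => ?_⟩
  · split_ifs
    exacts [Equiv.swap_apply_of_ne_of_ne (by grind) (by grind), rfl]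
  have mem_iff : ∀ k, (∀ x ∈ C, s k x ∈ C) → ∀ x, s k x ∈ C ↔ x ∈ C :=
    fun k hk x => ⟨fun hx => hs k x ▸ hk _ hx, hk x⟩
  have hi_iff := mem_iff i hCi
  have hj_iff := mem_iff j hCj
  rcases eq_or_ne c i with rfl | hci
  · intro x
    by_cases hx : x ∈ C <;> simp [recolor, hx, hi_iff, hj_iff, hs _ x]
  rcases eq_or_ne c j with rfl | hcj
  · intro x
    by_cases hx : x ∈ C <;> simp [recolor, hx, hi_iff, hj_iff, hs _ x]
  convert hs c using 1
  funext x
  by_cases hx : x ∈ C <;> simp [recolor, hx, Equiv.swap_apply_of_ne_of_ne hci hcj]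

variable [Fintype V] [DecidableEq V]

/-- If `X c` is a set of vertices for each colour `c`, its transform under the recolouring `π`. -/
def recolorSets (π : V → Equiv.Perm κ) (X : κ → Finset V) (c : κ) : Finset V :=
  {x | x ∈ X (π x c)}

lemma sum_card_eq_sum_card_filter (K : Finset κ) (X : κ → Finset V) :
    ∑ c ∈ K, #(X c) = ∑ x, #{c ∈ K | x ∈ X c} := by
  simpa [bipartiteAbove, bipartiteBelow] using
    sum_card_bipartiteAbove_eq_sum_card_bipartiteBelow (s := K) (t := univ) fun c x => x ∈ X c

variable {K : Finset κ} {s : κ → V → V} {X : κ → Finset V}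

@[simp]
lemma mem_recolorSets {π : V → Equiv.Perm κ} {c : κ} {x : V} :
    x ∈ recolorSets π X c ↔ x ∈ X (π x c) := by
  rw [recolorSets, mem_filter_univ]

lemma recolorSets_one : recolorSets 1 X = X := by
  ext
  simp

lemma recolorSets_mul (π π' : V → Equiv.Perm κ) :
    recolorSets (π * π') X = recolorSets π' (recolorSets π X) := by
  ext
  simp

lemma IsRecoloring.sum_card_recolorSets {π : V → Equiv.Perm κ} (h : IsRecoloring K s π) :
    ∑ c ∈ K, #(recolorSets π X c) = ∑ c ∈ K, #(X c) := by
  rw [sum_card_eq_sum_card_filter K X, sum_card_eq_sum_card_filter]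
  refine sum_congr rfl fun x _ => ?_
  simpa only [mem_recolorSets] using h.card_filter x (x ∈ X ·)

lemma IsRecoloring.recolor_eq_self {π : V → Equiv.Perm κ} (h : IsRecoloring K s π)
    (hX : ∀ c ∈ K, ∀ x ∈ X c, s c x = x) :
    ∀ c ∈ K, ∀ x ∈ recolorSets π X c, recolor π s c x = x :=
  fun c hc x hx => hX _ ((h.apply_mem_iff x c).2 hc) x (mem_recolorSets.1 hx)

lemma exists_isRecoloring_card_empty_lt (hs : ∀ c, Involutive (s c))
    (hX : ∀ c ∈ K, ∀ x ∈ X c, s c x = x) {i j : κ} (hi : i ∈ K) (hj : j ∈ K)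
    (hXi : 3 ≤ #(X i)) (hXj : X j = ∅) :
    ∃ π, IsRecoloring K s π ∧ #{c ∈ K | recolorSets π X c = ∅} < #{c ∈ K | X c = ∅} := by
  classical
  obtain ⟨u, hu⟩ : (X i).Nonempty := card_pos.1 (by omega)
  obtain ⟨C, huC, hCi, hCj, hC⟩ := exists_closed_set_of_involutive (hs i) (hs j) (hX i hi u hu)
  set π : V → Equiv.Perm κ := fun x => if x ∈ C then Equiv.swap i j else 1 with hπ
  have swapped_j : recolorSets π X j = {x ∈ X i | x ∈ C} := by
    ext x
    by_cases hx : x ∈ C <;> simp [hπ, hx, hXj]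
  have swapped_i : recolorSets π X i = {x ∈ X i | x ∉ C} := by
    ext x
    by_cases hx : x ∈ C <;> simp [hπ, hx, hXj]
  have card_swapped_j : #{x ∈ X i | x ∈ C} ≤ 2 := by
    have : #({x ∈ X i | x ∈ C}.erase u) ≤ 1 := by
      simp only [card_le_one, mem_erase, mem_filter]
      rintro x ⟨hxu, hx, hxC⟩ y ⟨hyu, hy, hyC⟩
      exact hC x hxC y hyC (hX i hi x hx) (hX i hi y hy) hxu hyu
    have := pred_card_le_card_erase (s := {x ∈ X i | x ∈ C}) (a := u)
    omega
  have swapped_i_nonempty : recolorSets π X i ≠ ∅ := by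
    have := card_filter_add_card_filter_not (s := X i) (· ∈ C)
    rw [swapped_i, Ne, ← card_eq_zero]
    omega
  have swapped_of_ne : ∀ c, c ≠ i → c ≠ j → recolorSets π X c = X c := fun c hci hcj => by
    ext x
    by_cases hx : x ∈ C <;>
      simp [hπ, hx, Equiv.swap_apply_of_ne_of_ne hci hcj]
  refine ⟨π, isRecoloring_swap hs hi hj hCi hCj, card_lt_card ?_⟩
  rw [ssubset_iff_of_subset]
  · refine ⟨j, by simp [hj, hXj], ?_⟩
    rw [mem_filter, swapped_j, ← not_nonempty_iff_eq_empty]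
    exact fun h => h.2 ⟨u, mem_filter.2 ⟨hu, huC⟩⟩
  · intro c hc
    obtain ⟨hcK, hc⟩ := mem_filter.1 hc
    refine mem_filter.2 ⟨hcK, ?_⟩
    have hci : c ≠ i := fun h => swapped_i_nonempty (h ▸ hc)
    by_cases hcj : c = j
    exacts [hcj ▸ hXj, swapped_of_ne c hci hcj ▸ hc]

/- If no class of the matchings is a singleton, the sum condition produces both an empty class and
one with at least three elements; a Kempe swap between them leaves fewer empty classes. -/
lemma exists_isRecoloring_card_eq_one (hs : ∀ c, Involutive (s c))
    (hX : ∀ c ∈ K, ∀ x ∈ X c, s c x = x) (hodd : Odd (∑ c ∈ K, #(X c)))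
    (hlt : ∑ c ∈ K, #(X c) < 2 * #K) :
    ∃ π, IsRecoloring K s π ∧ ∃ c ∈ K, #(recolorSets π X c) = 1 := by
  induction hN : #{c ∈ K | X c = ∅} using Nat.strong_induction_on generalizing s X with
  | _ N ih =>
  by_cases hone : ∃ c ∈ K, #(X c) = 1
  · exact ⟨1, .one hs, by rwa [recolorSets_one]⟩
  push Not at hone
  obtain ⟨j, hj, hXj⟩ : ∃ j ∈ K, X j = ∅ := by
    by_contra! hne
    refine hlt.not_ge ?_
    rw [mul_comm]
    refine card_nsmul_le_sum K _ 2 fun c hc => ?_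
    have := card_pos.2 (hne c hc)
    have := hone c hc
    omega
  obtain ⟨i, hi, hXi⟩ : ∃ i ∈ K, 3 ≤ #(X i) := by
    by_contra! hsmall
    refine Nat.not_even_iff_odd.2 hodd (even_sum _ fun c hc => ?_)
    have := hone c hc
    have := hsmall c hc
    grind
  obtain ⟨π, hπ, hcard⟩ := exists_isRecoloring_card_empty_lt hs hX hi hj hXi hXj
  obtain ⟨π', hπ', hone'⟩ := ih _ (hN ▸ hcard) hπ.involutive (hπ.recolor_eq_self hX)
    (by rwa [hπ.sum_card_recolorSets]) (by rwa [hπ.sum_card_recolorSets]) rfl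
  exact ⟨π * π', hπ.trans hπ' subset_rfl, by rwa [recolorSets_mul]⟩

end Recoloring

section Vizing

variable {V κ : Type*} {K : Finset κ}

lemma exists_subset_card_add_eq {t : Finset κ} {n k : ℕ} (h : n ≤ #t + k) (hk : k ≤ n) :
    ∃ P ⊆ t, #P + k = n := by
  obtain ⟨P, hP, hcard⟩ := exists_subset_card_eq (Nat.sub_le_iff_le_add.2 h)
  exact ⟨P, hP, by rw [hcard, Nat.sub_add_cancel hk]⟩

lemma card_filter_eq_card_filter_erase_add [DecidableEq κ] {c : κ} (hc : c ∈ K) (p : κ → Prop)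
    [DecidablePred p] :
    #{d ∈ K | p d} = #{d ∈ K.erase c | p d} + if p c then 1 else 0 := by
  rw [card_filter, card_filter, sum_erase_add _ _ hc]

variable [DecidableEq V] {s : κ → V → V} {M : V → V → ℕ} {S : Finset V} {v : V}

lemma involutive_comp_swap {f : V → V} (hf : Involutive f) {a b : V} (ha : f a = a) (hb : f b = b) :
    Involutive (f ∘ Equiv.swap a b) := fun x => by
  simp only [comp_apply, hf.injective.map_swap, ha, hb, hf _, Equiv.swap_apply_self]

/- The colour classes are extended to the new vertex `v` by composing them with transpositions. -/
lemma exists_involutive_insert [Fintype κ] (hs : ∀ c, Involutive (s c)) (hM : ∀ x y, M x y = M y x)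
    (hcard : ∀ x y, x ≠ y → #{c | s c x = y} = if x ∈ S ∧ y ∈ S then M x y else 0) (hv : v ∉ S)
    {a : κ → Option V} (ha : ∀ c u, a c = some u → s c u = u)
    (hacard : ∀ u, #{c | a c = some u} = if u ∈ S then M u v else 0) :
    ∃ s' : κ → V → V, (∀ c, Involutive (s' c)) ∧ ∀ x y, x ≠ y →
      #{c | s' c x = y} = if x ∈ insert v S ∧ y ∈ insert v S then M x y else 0 := by
  have fix_v : ∀ c, s c v = v := fun c => by
    by_contra hne
    have := hcard v (s c v) (Ne.symm hne)
    rw [if_neg fun h => hv h.1, card_eq_zero, filter_eq_empty_iff] at this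
    exact this (mem_univ c) rfl
  have fix_a : ∀ c, s c ((a c).getD v) = (a c).getD v := fun c => by
    cases h : a c with
    | none => exact fix_v c
    | some u => exact ha c u h
  set s' : κ → V → V := fun c => s c ∘ Equiv.swap v ((a c).getD v) with hs'
  have inv : ∀ c, Involutive (s' c) := fun c => involutive_comp_swap (hs c) (fix_v c) (fix_a c)
  have s'_v : ∀ c, s' c v = (a c).getD v := fun c => by simp [hs', fix_a]
  have card_v : ∀ y, y ≠ v → #{c | s' c v = y} = if y ∈ S then M y v else 0 := fun y hy => by
    rw [← hacard]
    refine congrArg card (filter_congr fun c _ => ?_)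
    rw [s'_v]
    cases a c <;> simp [hy.symm]
  have card_comm : ∀ x y, #{c | s' c x = y} = #{c | s' c y = x} := fun x y =>
    congrArg card <| filter_congr fun c _ => (inv c).eq_iff.trans eq_comm
  refine ⟨s', inv, fun x y hxy => ?_⟩
  rcases eq_or_ne x v with rfl | hx
  · simp [card_v y hxy.symm, hxy.symm, hM x y]
  rcases eq_or_ne y v with rfl | hy
  · simp [card_comm x, card_v x hxy, hxy]
  have eq_iff : ∀ c, s' c x = y ↔ s c x = y := fun c => by
    by_cases hxa : x = (a c).getD v
    · have hsx : s c x = x := hxa ▸ fix_a c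
      simp [hs', ← hxa, fix_v, hsx, hy.symm, hxy]
    · simp [hs', Equiv.swap_apply_of_ne_of_ne hx hxa]
  simp [eq_iff, hcard x y hxy, hx, hy]

variable [Fintype V]

/- Reserving `2 * m x` missing colours at each `x`, but one fewer at a vertex `u₀` with `0 < m u₀`,
makes the total odd, so after recolouring some colour is reserved at exactly one vertex `u`. Giving
it to `u` costs every other vertex nothing and leaves `u` as the exceptional vertex or not. -/
lemma exists_isRecoloring_assign_one [DecidableEq κ] (hs : ∀ c, Involutive (s c)) {m : V → ℕ}
    {u₀ : V} (hu₀ : 0 < m u₀) (hK : ∑ x, m x ≤ #K)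
    (hm : ∀ x, 2 * m x ≤ #{c ∈ K | s c x = x} + if x = u₀ then 1 else 0) :
    ∃ π, IsRecoloring K s π ∧ ∃ c ∈ K, ∃ u, 0 < m u ∧ recolor π s c u = u ∧
      ∀ x, 2 * m x ≤ #{d ∈ K.erase c | recolor π s d x = x} + (if x = u₀ then 1 else 0) +
        if x = u then 2 else 0 := by
  have exists_reserved : ∀ x, ∃ P ⊆ {c ∈ K | s c x = x},
      #P + (if x = u₀ then 1 else 0) = 2 * m x := fun x =>
    exists_subset_card_add_eq (hm x) (by
      split_ifs with hx
      exacts [by subst hx; omega, Nat.zero_le _])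
  choose P hP hPcard using exists_reserved
  set X : κ → Finset V := fun c => {x | c ∈ P x}
  have card_X : ∀ x, #{c ∈ K | x ∈ X c} = #(P x) := fun x => congrArg card <| by
    ext c
    simpa [X] using fun hc => (mem_filter.1 (hP x hc)).1
  have sum_X : ∑ c ∈ K, #(X c) + 1 = 2 * ∑ x, m x := by
    rw [sum_card_eq_sum_card_filter, mul_sum, ← sum_congr rfl fun x _ => hPcard x]
    simp [card_X, sum_add_distrib]
  have : 0 < ∑ x, m x := sum_pos' (fun _ _ => Nat.zero_le _) ⟨u₀, mem_univ _, hu₀⟩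
  have hX : ∀ c ∈ K, ∀ x ∈ X c, s c x = x := fun c _ x hx =>
    (mem_filter.1 (hP x (by simpa [X] using hx))).2
  obtain ⟨π, hπ, c, hc, hone⟩ := exists_isRecoloring_card_eq_one hs hX
    (by rw [← Nat.not_even_iff_odd, even_iff_two_dvd]; omega) (by omega)
  obtain ⟨u, hu⟩ := card_eq_one.1 hone
  have hX' := hπ.recolor_eq_self hX
  have card_reserved : ∀ x,
      #{d ∈ K.erase c | x ∈ recolorSets π X d} + (if x = u then 1 else 0) = #(P x) := by
    intro x
    have := card_filter_eq_card_filter_erase_add hc (x ∈ recolorSets π X ·)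
    simp only [hu, mem_singleton] at this
    rw [← this, ← card_X]
    simpa only [mem_recolorSets] using hπ.card_filter x (x ∈ X ·)
  refine ⟨π, hπ, c, hc, u, ?_, hX' c hc u (by simp [hu]), fun x => ?_⟩
  · have := card_reserved u
    have := hPcard u
    rw [if_pos rfl] at *
    omega
  · have : #{d ∈ K.erase c | x ∈ recolorSets π X d} ≤ #{d ∈ K.erase c | recolor π s d x = x} :=
      card_le_card (monotone_filter_right _ fun d hd => hX' d (mem_of_mem_erase hd) x)
    have := card_reserved x
    have := hPcard x
    split_ifs at * <;> omega

lemma exists_isRecoloring_assign (hs : ∀ c, Involutive (s c)) {m : V → ℕ} (u₀ : V)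
    (hK : ∑ x, m x ≤ #K)
    (hm : ∀ x, 2 * m x ≤ #{c ∈ K | s c x = x} + if x = u₀ then 1 else 0) :
    ∃ π, IsRecoloring K s π ∧ ∃ a : κ → Option V,
      (∀ c ∈ K, ∀ u, a c = some u → recolor π s c u = u) ∧ ∀ u, #{c ∈ K | a c = some u} = m u := by
  classical
  induction hn : ∑ x, m x generalizing K s m u₀ with
  | zero =>
    refine ⟨1, .one hs, fun _ => none, by simp, fun u => ?_⟩
    simp [sum_eq_zero_iff.1 hn u (mem_univ u)]
  | succ n ih =>
    obtain ⟨u₁, hu₁, hm₁⟩ : ∃ u₁, 0 < m u₁ ∧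
        ∀ x, 2 * m x ≤ #{c ∈ K | s c x = x} + if x = u₁ then 1 else 0 := by
      by_cases hu₀ : 0 < m u₀
      · exact ⟨u₀, hu₀, hm⟩
      obtain ⟨u₁, -, hu₁⟩ := exists_ne_zero_of_sum_ne_zero (hn.trans_ne n.succ_ne_zero)
      refine ⟨u₁, Nat.pos_of_ne_zero hu₁, fun x => ?_⟩
      rcases eq_or_ne x u₀ with rfl | hx
      · omega
      · have := hm x
        rw [if_neg hx] at this
        omega
    obtain ⟨π, hπ, c, hc, u, hu, hfix, hm'⟩ := exists_isRecoloring_assign_one hs hu₁ hK hm₁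
    have hsum : ∑ x, (m x - if x = u then 1 else 0) = n := by
      rw [sum_tsub_distrib _ fun x _ => by split_ifs with hx; exacts [hx ▸ hu, Nat.zero_le _]]
      simp [hn]
    obtain ⟨π', hπ', a, ha, hcard⟩ := ih hπ.involutive u₁
      (by rw [hsum, card_erase_of_mem hc]; omega)
      (fun x => by have := hm' x; split_ifs at this ⊢ <;> omega) hsum
    refine ⟨π * π', hπ.trans hπ' (erase_subset c K), update a c (some u), fun d hd w hw => ?_,
      fun w => ?_⟩
    · rcases eq_or_ne d c with rfl | hdc
      · obtain rfl : u = w := by simpa using hw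
        change recolor π s (π' u d) u = u
        rw [hπ'.apply_of_notMem u d (notMem_erase d K), hfix]
      · exact ha d (mem_erase.2 ⟨hdc, hd⟩) w (by rwa [update_of_ne hdc] at hw)
    · have hne : #{d ∈ K.erase c | update a c (some u) d = some w} =
          #{d ∈ K.erase c | a d = some w} :=
        congrArg card <| filter_congr fun d hd => by rw [update_of_ne (ne_of_mem_erase hd)]
      rw [card_filter_eq_card_filter_erase_add hc, hne, hcard]
      rcases eq_or_ne w u with rfl | hw
      · simpa using Nat.sub_add_cancel hu
      · simp [hw, hw.symm]

variable [Fintype κ]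

lemma two_mul_le_card_fixed
    (hcard : ∀ x y, x ≠ y → #{c | s c x = y} = if x ∈ S ∧ y ∈ S then M x y else 0) (hv : v ∉ S)
    {x : V} (hdeg : ∑ z, M x z + M x v ≤ Fintype.card κ) (hxv : x ≠ v) :
    2 * M x v ≤ #{c | s c x = x} := by
  have card_eq : Fintype.card κ = #{c | s c x = x} + ∑ y ∈ univ.erase x, #{c | s c x = y} := by
    rw [add_sum_erase _ (fun y => #{c | s c x = y}) (mem_univ x)]
    exact card_eq_sum_card_fiberwise fun _ _ => mem_univ _
  have sum_le : ∑ y ∈ univ.erase x, #{c | s c x = y} ≤ ∑ y ∈ univ.erase v, M x y := by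
    rw [← add_sum_erase _ _ (mem_erase.2 ⟨hxv.symm, mem_univ v⟩), hcard x v hxv,
      if_neg fun h => hv h.2, zero_add]
    refine (sum_le_sum fun y hy => ?_).trans
      (sum_le_sum_of_subset (erase_subset_erase v (erase_subset x univ)))
    rw [hcard x y (ne_of_mem_erase (mem_of_mem_erase hy)).symm]
    split_ifs <;> omega
  have := add_sum_erase _ (M x) (mem_univ v)
  omega

/-- **Vizing's theorem** for multigraphs, the edges being counted by the multiplicities `M x y`. -/
theorem exists_involutive_card_eq (hM : ∀ x y, M x y = M y x)
    (hdeg : ∀ x y, ∑ z, M x z + M x y ≤ Fintype.card κ) :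
    ∃ s : κ → V → V, (∀ c, Involutive (s c)) ∧ ∀ x y, x ≠ y → #{c | s c x = y} = M x y := by
  suffices h : ∀ S : Finset V, ∃ s : κ → V → V, (∀ c, Involutive (s c)) ∧
      ∀ x y, x ≠ y → #{c | s c x = y} = if x ∈ S ∧ y ∈ S then M x y else 0 by
    simpa using h univ
  intro S
  induction S using Finset.induction_on with
  | empty => exact ⟨fun _ => id, fun _ _ => rfl, fun x y hxy => by simp [hxy]⟩
  | insert v S hv ih =>
    obtain ⟨s, hs, hcard⟩ := ih
    set m : V → ℕ := fun x => if x ∈ S then M x v else 0 with hm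
    have sum_m : ∑ x, m x ≤ #(univ : Finset κ) := by
      refine (sum_le_sum fun x _ => ?_).trans ((Nat.le_add_right _ _).trans (hdeg v v))
      simp only [hm, hM v x]
      split_ifs <;> omega
    obtain ⟨π, hπ, a, ha, hacard⟩ := exists_isRecoloring_assign hs v sum_m fun x => by
      by_cases hx : x ∈ S
      · simp only [hm, hx, ne_of_mem_of_not_mem hx hv, if_true, if_false, add_zero]
        exact two_mul_le_card_fixed hcard hv (hdeg x v) (ne_of_mem_of_not_mem hx hv)
      · simp [hm, hx]
    refine exists_involutive_insert hπ.involutive hM (fun x y hxy => ?_) hv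
      (fun c => ha c (mem_univ c)) hacard
    rw [← hcard x y hxy]
    exact hπ.card_filter x (s · x = y)

end Vizing

section EdgeColoring

variable {ε W κ : Type*} [DecidableEq W] [Fintype κ] {E : Finset ε}
  {ends : ε → Sym2 W}

lemma card_filter_mem_ends [Fintype W] (x : W) :
    #{e ∈ E | x ∈ ends e} = ∑ z, #{e ∈ E | ends e = s(x, z)} := by
  classical
  rw [← card_biUnion]
  · refine congrArg card ?_
    ext e
    simp [Sym2.mem_iff_exists]
  · intro y _ z _ hyz
    refine disjoint_filter.2 fun e _ hy hz => hyz ?_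
    exact Sym2.congr_right.1 (hy.symm.trans hz)

/-- **Vizing's theorem** for loopless multigraphs of maximum degree `D` and multiplicity `μ`. -/
theorem exists_edgeColoring_of_card_le [Finite W] [Nonempty κ] {D μ : ℕ}
    (hloop : ∀ e ∈ E, ¬(ends e).IsDiag)
    (hD : ∀ x, #{e ∈ E | x ∈ ends e} ≤ D) (hμ : ∀ p, #{e ∈ E | ends e = p} ≤ μ)
    (hκ : D + μ ≤ Fintype.card κ) :
    ∃ c : ε → κ, ∀ e₁ ∈ E, ∀ e₂ ∈ E, c e₁ = c e₂ →
      ∀ x, x ∈ ends e₁ → x ∈ ends e₂ → e₁ = e₂ := by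
  have := Fintype.ofFinite W
  obtain ⟨s, hs, hcard⟩ := exists_involutive_card_eq (κ := κ)
    (M := fun x y => #{e ∈ E | ends e = s(x, y)}) (fun x y => by rw [Sym2.eq_swap]) fun x y => by
      rw [← card_filter_mem_ends]
      exact (Nat.add_le_add (hD x) (hμ _)).trans hκ
  have exists_color : ∀ p : Sym2 W, ∃ c : ε → κ,
      (∀ e ∈ E, ends e = p → ∀ x ∈ p, s(x, s (c e) x) = p) ∧
        Set.InjOn c {e ∈ E | ends e = p} := by
    intro p
    induction p with
    | _ x y =>
    rcases eq_or_ne x y with rfl | hxy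
    · have no_loop : ∀ e ∈ E, ends e ≠ s(x, x) := fun e he h => hloop e he (h ▸ rfl)
      exact ⟨Classical.arbitrary _, fun e he h => absurd h (no_loop e he),
        fun e he => absurd he.2 (no_loop e he.1)⟩
    · have hle : (({e ∈ E | ends e = s(x, y)} : Finset ε) : Set ε).encard ≤
          (({k | s k x = y} : Finset κ) : Set κ).encard := by
        simpa only [Set.encard_coe_eq_coe_finsetCard, Nat.cast_le] using (hcard x y hxy).ge
      obtain ⟨c, hc, hinj⟩ := (finite_toSet _).exists_injOn_of_encard_le hle
      refine ⟨c, fun e he hexy z hz => ?_, by simpa using hinj⟩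
      have hcx : s (c e) x = y := by simpa using hc (mem_filter.2 ⟨he, hexy⟩)
      rcases Sym2.mem_iff.1 hz with rfl | rfl
      · rw [hcx]
      · rw [← (hs _).eq_iff.1 hcx, Sym2.eq_swap]
  choose c hends hinj using exists_color
  refine ⟨fun e => c (ends e) e, fun e₁ he₁ e₂ he₂ hc x hx₁ hx₂ => ?_⟩
  have hends_eq : ends e₁ = ends e₂ := by
    rw [← hends _ e₁ he₁ rfl x hx₁, ← hends _ e₂ he₂ rfl x hx₂]
    exact congrArg (fun k => s(x, s k x)) hc
  refine hinj (ends e₁) ⟨he₁, rfl⟩ ⟨he₂, hends_eq.symm⟩ ?_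
  simpa only [hends_eq] using hc

end EdgeColoring

/-! ### Contracting fragile edges -/

section Fragile

variable {V : Type*} {G : SimpleGraph V} {big : V → Prop} {u v w : V}

/-- An edge of `G` with small endpoints all of whose other neighbours are big. -/
def Fragile (G : SimpleGraph V) (big : V → Prop) (u v : V) : Prop :=
  G.Adj u v ∧ ¬big u ∧ ¬big v ∧ ∀ w, (G.Adj u w ∨ G.Adj v w) → w ≠ u → w ≠ v → big w

lemma Fragile.symm (h : Fragile G big u v) : Fragile G big v u :=
  ⟨h.1.symm, h.2.2.1, h.2.1, fun w hw hwv hwu => h.2.2.2 w hw.symm hwu hwv⟩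

lemma Fragile.eq (huv : Fragile G big u v) (huw : Fragile G big u w) : v = w := by
  by_contra hne
  exact huw.2.2.1 (huv.2.2.2 w (Or.inl huw.1) huw.1.ne.symm (Ne.symm hne))

open scoped Classical in
/-- The vertex forming a fragile edge with `u`, or `u` itself if there is none. -/
noncomputable def partner (G : SimpleGraph V) (big : V → Prop) (u : V) : V :=
  if h : ∃ v, Fragile G big u v then h.choose else u

lemma Fragile.partner_eq (h : Fragile G big u v) : partner G big u = v := by
  have hex : ∃ v, Fragile G big u v := ⟨v, h⟩
  rw [partner, dif_pos hex]
  exact hex.choose_spec.eq h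

lemma fragile_partner (h : partner G big u ≠ u) : Fragile G big u (partner G big u) := by
  by_cases hex : ∃ v, Fragile G big u v
  · obtain ⟨v, hv⟩ := hex
    rwa [hv.partner_eq]
  · exact absurd (dif_neg hex) h

lemma partner_involutive (G : SimpleGraph V) (big : V → Prop) : Involutive (partner G big) := by
  intro u
  by_cases h : partner G big u = u
  · rw [h, h]
  · exact (fragile_partner h).symm.partner_eq

/-- The vertex representing `u` in the multigraph obtained from `G` by contracting all fragile
edges. It is encoded as the unordered pair of the vertices merged into it. -/
noncomputable def mergedVertex (G : SimpleGraph V) (big : V → Prop) (u : V) : Sym2 V :=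
  s(u, partner G big u)

lemma mergedVertex_eq_iff :
    mergedVertex G big u = mergedVertex G big v ↔ v = u ∨ v = partner G big u := by
  rw [mergedVertex, mergedVertex, Sym2.eq_iff]
  constructor
  · rintro (⟨h, -⟩ | ⟨-, h⟩)
    exacts [Or.inl h.symm, Or.inr h.symm]
  · rintro (rfl | rfl)
    exacts [Or.inl ⟨rfl, rfl⟩, Or.inr ⟨(partner_involutive G big u).symm, rfl⟩]

lemma mergedVertex_mem_map_iff {e : Sym2 V} :
    mergedVertex G big u ∈ e.map (mergedVertex G big) ↔ u ∈ e ∨ partner G big u ∈ e := by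
  simp only [Sym2.mem_map, eq_comm (b := mergedVertex G big u), mergedVertex_eq_iff]
  aesop

variable [Fintype V]

open scoped Classical in
/-- The edges of `G` that are not fragile, that is, those that survive the contraction. -/
noncomputable def survivingEdges (G : SimpleGraph V) (big : V → Prop) : Finset (Sym2 V) :=
  {e | e ∈ G.edgeSet ∧ ¬(e.map (mergedVertex G big)).IsDiag}

lemma mem_survivingEdges {e : Sym2 V} : e ∈ survivingEdges G big ↔
    e ∈ G.edgeSet ∧ ¬(e.map (mergedVertex G big)).IsDiag := by
  simp only [survivingEdges, mem_filter, mem_univ, true_and]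

lemma mk_mem_survivingEdges :
    s(u, v) ∈ survivingEdges G big ↔ G.Adj u v ∧ v ≠ partner G big u := by
  simp only [mem_survivingEdges, SimpleGraph.mem_edgeSet, Sym2.map_mk,
    Sym2.mk_isDiag_iff, mergedVertex_eq_iff, not_or]
  exact ⟨fun h => ⟨h.1, h.2.2⟩, fun h => ⟨h.1, h.1.ne.symm, h.2⟩⟩

lemma card_surviving_incident_le [DecidableEq V] [DecidableRel G.Adj] {Δ : ℕ}
    (hdeg : ∀ v, G.degree v ≤ Δ) (hsmall : ∀ v, ¬big v → 2 * G.degree v ≤ Δ) (x : Sym2 V) :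
    #{e ∈ survivingEdges G big | x ∈ e.map (mergedVertex G big)} ≤ Δ := by
  by_cases hx : ∃ u, mergedVertex G big u = x
  · obtain ⟨u, rfl⟩ := hx
    have hsub : {e ∈ survivingEdges G big | mergedVertex G big u ∈ e.map (mergedVertex G big)} ⊆
        G.incidenceFinset u ∪ G.incidenceFinset (partner G big u) := fun e he => by
      rw [mem_filter, mergedVertex_mem_map_iff] at he
      have heG : e ∈ G.edgeSet := (mem_survivingEdges.1 he.1).1
      simp only [mem_union, SimpleGraph.mem_incidenceFinset]
      exact he.2.imp (⟨heG, ·⟩) (⟨heG, ·⟩)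
    refine (card_le_card hsub).trans ?_
    by_cases hpartner : partner G big u = u
    · rw [hpartner, union_self, SimpleGraph.card_incidenceFinset_eq_degree]
      exact hdeg u
    · obtain ⟨-, hu, hpu, -⟩ := fragile_partner hpartner
      have := card_union_le (G.incidenceFinset u) (G.incidenceFinset (partner G big u))
      simp only [SimpleGraph.card_incidenceFinset_eq_degree] at this
      have := hsmall _ hu
      have := hsmall _ hpu
      omega
  · rw [filter_false_of_mem fun e _ hxe => ?_]
    · exact Nat.zero_le Δ
    · obtain ⟨u, -, hu⟩ := Sym2.mem_map.1 hxe
      exact hx ⟨u, hu⟩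

lemma card_surviving_parallel_le [DecidableEq V] (q : Sym2 (Sym2 V)) :
    #{e ∈ survivingEdges G big | e.map (mergedVertex G big) = q} ≤ 2 := by
  rcases Finset.eq_empty_or_nonempty
    {e ∈ survivingEdges G big | e.map (mergedVertex G big) = q} with hempty | ⟨e, hmem⟩
  · simp [hempty]
  obtain ⟨he, rfl⟩ := mem_filter.1 hmem
  clear hmem
  induction e with | _ a b
  wlog hb : partner G big b = b generalizing a b
  · rw [Sym2.eq_swap] at he ⊢
    refine this b a he ?_
    by_contra ha
    rw [Sym2.eq_swap, mk_mem_survivingEdges] at he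
    exact (fragile_partner hb).2.1 ((fragile_partner ha).2.2.2 b (Or.inl he.1) he.1.ne.symm he.2)
  refine (card_le_card (t := {s(a, b), s(partner G big a, b)}) fun e' he' => ?_).trans card_le_two
  have heq := (mem_filter.1 he').2
  induction e' with | _ a' b'
  simp only [Sym2.map_mk, Sym2.eq_iff, eq_comm (b := mergedVertex G big a),
    eq_comm (b := mergedVertex G big b), mergedVertex_eq_iff, hb, or_self] at heq
  rw [mem_insert, mem_singleton]
  rcases heq with ⟨rfl | rfl, rfl⟩ | ⟨rfl, rfl | rfl⟩ <;> simp

lemma exists_free_color {ε κ : Type*} [Fintype κ] {E : Finset ε} (c : ε → κ)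
    (h : #E < Fintype.card κ) : ∃ k, ∀ e ∈ E, c e ≠ k := by
  classical
  obtain ⟨k, -, hk⟩ := exists_mem_notMem_of_card_lt_card
    (card_image_le.trans_lt h : #(E.image c) < #univ)
  exact ⟨k, fun e he hek => hk (mem_image.2 ⟨e, he, hek⟩)⟩

lemma exists_contraction_coloring [DecidableRel G.Adj] {Δ : ℕ}
    (hdeg : ∀ v, G.degree v ≤ Δ) (hsmall : ∀ v, ¬big v → 2 * G.degree v ≤ Δ) :
    ∃ c free : Sym2 V → Fin (Δ + 2),
      (∀ e₁ ∈ survivingEdges G big, ∀ e₂ ∈ survivingEdges G big, c e₁ = c e₂ → ∀ u v, u ∈ e₁ →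
        v ∈ e₂ → mergedVertex G big u = mergedVertex G big v → e₁ = e₂) ∧
      ∀ e ∈ survivingEdges G big, ∀ u ∈ e, c e ≠ free (mergedVertex G big u) := by
  classical
  obtain ⟨c, hc⟩ := exists_edgeColoring_of_card_le (κ := Fin (Δ + 2))
    (fun e he => (mem_survivingEdges.1 he).2) (card_surviving_incident_le hdeg hsmall)
    card_surviving_parallel_le (Fintype.card_fin _).ge
  choose free hfree using fun x => exists_free_color c
    (E := {e ∈ survivingEdges G big | x ∈ e.map (mergedVertex G big)})
    (by rw [Fintype.card_fin]; exact (card_surviving_incident_le hdeg hsmall x).trans_lt (by omega))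
  exact ⟨c, free, fun e₁ he₁ e₂ he₂ heq u v hu hv huv => hc e₁ he₁ e₂ he₂ heq _
    (Sym2.mem_map.2 ⟨u, hu, rfl⟩) (Sym2.mem_map.2 ⟨v, hv, huv.symm⟩),
    fun e he u hu => hfree _ e (mem_filter.2 ⟨he, Sym2.mem_map.2 ⟨u, hu, rfl⟩⟩)⟩

/- A fragile edge receives a colour missing at the vertex it is contracted to. -/
theorem exists_coloring_separating_fragile [DecidableRel G.Adj] {Δ : ℕ}
    (hdeg : ∀ v, G.degree v ≤ Δ) (hsmall : ∀ v, ¬big v → 2 * G.degree v ≤ Δ) :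
    ∃ c : Sym2 V → ℕ, ProperEdgeColoring G c ∧ (∀ e, c e < Δ + 2) ∧
      ∀ u v, Fragile G big u v → ∀ x y, G.Adj u x → x ≠ v → G.Adj v y → y ≠ u →
        c s(u, x) ≠ c s(v, y) := by
  classical
  obtain ⟨c, free, hc, hfree⟩ := exists_contraction_coloring hdeg hsmall
  have hfragile : ∀ {u v}, G.Adj u v → s(u, v) ∉ survivingEdges G big → v = partner G big u :=
    fun huv h => by_contra fun hv => h (mk_mem_survivingEdges.2 ⟨huv, hv⟩)
  have hmixed : ∀ {u x y}, s(u, x) ∈ survivingEdges G big → G.Adj u y →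
      s(u, y) ∉ survivingEdges G big → c s(u, x) ≠ free s(u, y) := fun hx huy hy => by
    rw [hfragile huy hy]
    exact hfree _ hx _ (Sym2.mem_mk_left _ _)
  refine ⟨fun e => if e ∈ survivingEdges G big then c e else free e, ?_, fun e => ?_, ?_⟩
  · rintro e₁ he₁ e₂ he₂ hne ⟨u, hu₁, hu₂⟩ heq
    obtain ⟨x, rfl⟩ := Sym2.mem_iff_exists.1 hu₁
    obtain ⟨y, rfl⟩ := Sym2.mem_iff_exists.1 hu₂
    dsimp only at heq
    split_ifs at heq with hx hy hy
    · exact hne (hc _ hx _ hy (Fin.ext heq) u u hu₁ hu₂ rfl)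
    · exact hmixed hx he₂ hy (Fin.ext heq)
    · exact hmixed hy he₁ hx (Fin.ext heq.symm)
    · exact hne (congrArg (s(u, ·)) ((hfragile he₁ hx).trans (hfragile he₂ hy).symm))
  · dsimp only
    split_ifs <;> exact Fin.isLt _
  · intro u v huv x y hux hxv hvy hyu heq
    have hx : s(u, x) ∈ survivingEdges G big :=
      mk_mem_survivingEdges.2 ⟨hux, by rwa [huv.partner_eq]⟩
    have hy : s(v, y) ∈ survivingEdges G big :=
      mk_mem_survivingEdges.2 ⟨hvy, by rwa [huv.symm.partner_eq]⟩
    dsimp only at heq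
    rw [if_pos hx, if_pos hy] at heq
    rcases Sym2.eq_iff.1 (hc _ hx _ hy (Fin.ext heq) u v (Sym2.mem_mk_left _ _)
      (Sym2.mem_mk_left _ _) (mergedVertex_eq_iff.2 (Or.inr huv.partner_eq.symm))) with h | h
    exacts [huv.1.ne h.1, hxv h.2]

end Fragile

/-! ### Counting choices that avoid forbidden patterns -/

section CountingLemma

variable {I A ε : Type*} [Fintype I] [DecidableEq I] [DecidableEq A] (L : I → Finset A)
  (E : Finset ε) (B : ε → Finset (I × A)) (a₀ : A)

/-- The choices of `f i ∈ L i` for `i ∈ S` avoiding the forbidden patterns `B e`, `e ∈ E`, that are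
supported on `S`. So that they can be counted, they are extended by the default value `a₀`. -/
def goodChoices (S : Finset I) : Finset (I → A) :=
  {f ∈ Fintype.piFinset fun i => if i ∈ S then L i else {a₀} |
    ∀ e ∈ E, (∀ p ∈ B e, p.1 ∈ S) → ∃ p ∈ B e, f p.1 ≠ p.2}

/-- The choices on `insert i S` whose restriction to `S` is good. -/
def extendedChoices (S : Finset I) (i : I) : Finset (I → A) :=
  (goodChoices L E B a₀ S ×ˢ L i).image fun p => update p.1 i p.2

/-- The choices on `insert i S`, good on `S`, that contain the forbidden pattern `B e`. -/
def violatingChoices (S : Finset I) (i : I) (e : ε) : Finset (I → A) :=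
  {f ∈ extendedChoices L E B a₀ S i | ∀ p ∈ B e, p.1 ∈ insert i S ∧ f p.1 = p.2}

variable {L E B a₀} {S : Finset I} {f : I → A}

lemma mem_goodChoices :
    f ∈ goodChoices L E B a₀ S ↔ (∀ i ∈ S, f i ∈ L i) ∧ (∀ i ∉ S, f i = a₀) ∧
      ∀ e ∈ E, (∀ p ∈ B e, p.1 ∈ S) → ∃ p ∈ B e, f p.1 ≠ p.2 := by
  have mem_ite : ∀ i, f i ∈ (if i ∈ S then L i else {a₀}) ↔
      (i ∈ S → f i ∈ L i) ∧ (i ∉ S → f i = a₀) := fun i => by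
    split_ifs with hi <;> simp [hi]
  simp only [goodChoices, mem_filter, Fintype.mem_piFinset, mem_ite, forall_and, and_assoc]

lemma piecewise_mem_goodChoices {R : Finset I} (hR : R ⊆ S) (hf : f ∈ goodChoices L E B a₀ S) :
    R.piecewise f (fun _ => a₀) ∈ goodChoices L E B a₀ R := by
  rw [mem_goodChoices] at hf ⊢
  refine ⟨fun i hi => ?_, fun i hi => piecewise_eq_of_notMem _ _ _ hi, fun e he hBe => ?_⟩
  · rw [piecewise_eq_of_mem _ _ _ hi]
    exact hf.1 i (hR hi)
  · obtain ⟨p, hp, hne⟩ := hf.2.2 e he fun p hp => hR (hBe p hp)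
    exact ⟨p, hp, by rwa [piecewise_eq_of_mem _ _ _ (hBe p hp)]⟩

variable {i : I}

lemma mem_extendedChoices (hi : i ∉ S) (hf : f ∈ extendedChoices L E B a₀ S i) :
    f i ∈ L i ∧ (∀ j ∉ insert i S, f j = a₀) ∧
      S.piecewise f (fun _ => a₀) ∈ goodChoices L E B a₀ S := by
  simp only [extendedChoices, mem_image, mem_product, Prod.exists] at hf
  obtain ⟨g, a, ⟨hg, ha⟩, rfl⟩ := hf
  have g_default := (mem_goodChoices.1 hg).2.1
  refine ⟨by simpa using ha, fun j hj => ?_, ?_⟩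
  · rw [mem_insert, not_or] at hj
    rw [update_of_ne hj.1, g_default j hj.2]
  · convert hg using 1
    funext j
    by_cases hj : j ∈ S
    · rw [piecewise_eq_of_mem _ _ _ hj, update_of_ne (ne_of_mem_of_not_mem hj hi)]
    · rw [piecewise_eq_of_notMem _ _ _ hj, g_default j hj]

lemma card_extendedChoices (hi : i ∉ S) :
    #(extendedChoices L E B a₀ S i) = #(goodChoices L E B a₀ S) * #(L i) := by
  rw [extendedChoices, card_image_of_injOn, card_product]
  rintro ⟨f, a⟩ hf ⟨g, b⟩ hg heq
  simp only [coe_product, Set.mem_prod, mem_coe] at hf hg heq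
  refine Prod.ext (funext fun j => ?_) (by simpa using congrFun heq i)
  rcases eq_or_ne j i with rfl | hj
  · exact ((mem_goodChoices.1 hf.1).2.1 j hi).trans ((mem_goodChoices.1 hg.1).2.1 j hi).symm
  · simpa [hj] using congrFun heq j

lemma extendedChoices_subset (hi : i ∉ S) :
    extendedChoices L E B a₀ S i ⊆ goodChoices L E B a₀ (insert i S) ∪
      {e ∈ E | i ∈ (B e).image Prod.fst}.biUnion (violatingChoices L E B a₀ S i) := by
  intro f hf
  obtain ⟨hfi, hdefault, hgood⟩ := mem_extendedChoices hi hf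
  rw [mem_goodChoices] at hgood
  by_cases hviol : ∃ e ∈ E, ∀ p ∈ B e, p.1 ∈ insert i S ∧ f p.1 = p.2
  · obtain ⟨e, he, hBe⟩ := hviol
    refine mem_union_right _ (mem_biUnion.2 ⟨e, mem_filter.2 ⟨he, ?_⟩, mem_filter.2 ⟨hf, hBe⟩⟩)
    by_contra hie
    have hBS : ∀ p ∈ B e, p.1 ∈ S := fun p hp =>
      mem_of_mem_insert_of_ne (hBe p hp).1 fun h => hie (mem_image.2 ⟨p, hp, h⟩)
    obtain ⟨p, hp, hne⟩ := hgood.2.2 e he hBS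
    exact hne (by rw [piecewise_eq_of_mem _ _ _ (hBS p hp), (hBe p hp).2])
  · refine mem_union_left _ (mem_goodChoices.2 ⟨fun j hj => ?_, hdefault, fun e he hBe => ?_⟩)
    · rcases mem_insert.1 hj with rfl | hjS
      · exact hfi
      · simpa [hjS] using hgood.1 j hjS
    · by_contra! hagree
      exact hviol ⟨e, he, fun p hp => ⟨hBe p hp, hagree p hp⟩⟩

variable {e : ε}

lemma card_violatingChoices_le (hi : i ∉ S) (hie : i ∈ (B e).image Prod.fst) :
    #(violatingChoices L E B a₀ S i e) ≤ #(goodChoices L E B a₀ (S \ (B e).image Prod.fst)) := by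
  set R := S \ (B e).image Prod.fst
  refine card_le_card_of_injOn (fun f => R.piecewise f fun _ => a₀) (fun f hf => ?_)
    fun f hf g hg heq => funext fun j => ?_
  · have := piecewise_mem_goodChoices (R := R) sdiff_subset
      (mem_extendedChoices hi (mem_filter.1 hf).1).2.2
    rwa [piecewise_piecewise_of_subset_left sdiff_subset] at this
  · obtain ⟨hf, hfe⟩ := mem_filter.1 hf
    obtain ⟨hg, hge⟩ := mem_filter.1 hg
    by_cases hj : j ∈ (B e).image Prod.fst
    · obtain ⟨p, hp, rfl⟩ := mem_image.1 hj
      rw [(hfe p hp).2, (hge p hp).2]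
    by_cases hjS : j ∈ S
    · have hjR : j ∈ R := mem_sdiff.2 ⟨hjS, hj⟩
      simpa [hjR] using congrFun heq j
    · have hji : j ∉ insert i S := by
        rw [mem_insert, not_or]
        exact ⟨fun h => hj (h ▸ hie), hjS⟩
      rw [(mem_extendedChoices hi hf).2.1 j hji, (mem_extendedChoices hi hg).2.1 j hji]

variable {β : ℝ}

lemma card_goodChoices_sdiff_mul_pow_le (hβ : 0 < β) {U : Finset I} (hU : U ⊆ S)
    (hgrow : ∀ R ⊂ S, ∀ i ∈ S \ R,
      β * #(goodChoices L E B a₀ R) ≤ #(goodChoices L E B a₀ (insert i R))) :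
    #(goodChoices L E B a₀ (S \ U)) * β ^ #U ≤ #(goodChoices L E B a₀ S) := by
  induction U using Finset.induction_on with
  | empty => simp
  | insert u U huU ih =>
    obtain ⟨huS, hUS⟩ := insert_subset_iff.1 hU
    have hmem : u ∈ insert u U := mem_insert_self u U
    have step := hgrow (S \ insert u U) (sdiff_ssubset hU ⟨u, hmem⟩) u (by simp [huS])
    have hinsert : insert u (S \ insert u U) = S \ U := by
      rw [sdiff_insert, insert_erase (mem_sdiff.2 ⟨huS, huU⟩)]
    rw [hinsert] at step
    calc (#(goodChoices L E B a₀ (S \ insert u U)) : ℝ) * β ^ #(insert u U)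
        = β * #(goodChoices L E B a₀ (S \ insert u U)) * β ^ #U := by
          rw [card_insert_of_notMem huU, pow_succ]; ring
      _ ≤ #(goodChoices L E B a₀ (S \ U)) * β ^ #U := by gcongr
      _ ≤ #(goodChoices L E B a₀ S) := ih hUS

lemma card_violatingChoices_le_mul (hβ : 0 < β) (hi : i ∉ S) (hie : i ∈ (B e).image Prod.fst)
    (hgrow : ∀ R ⊂ S, ∀ i ∈ S \ R,
      β * #(goodChoices L E B a₀ R) ≤ #(goodChoices L E B a₀ (insert i R))) :
    (#(violatingChoices L E B a₀ S i e) : ℝ) ≤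
      #(goodChoices L E B a₀ S) * (β ^ (#(B e) - 1))⁻¹ := by
  rcases (violatingChoices L E B a₀ S i e).eq_empty_or_nonempty with hempty | ⟨f, hf⟩
  · rw [hempty, card_empty, Nat.cast_zero]
    positivity
  have hfe := (mem_filter.1 hf).2
  set U := ((B e).image Prod.fst).erase i with hU
  have hUS : U ⊆ S := fun j hj => by
    obtain ⟨hji, hj⟩ := mem_erase.1 hj
    obtain ⟨p, hp, rfl⟩ := mem_image.1 hj
    exact mem_of_mem_insert_of_ne (hfe p hp).1 hji
  have hUcard : #U = #(B e) - 1 := by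
    rw [hU, card_erase_of_mem hie, card_image_of_injOn]
    exact fun p hp q hq hpq => Prod.ext hpq (by rw [← (hfe p hp).2, ← (hfe q hq).2, hpq])
  have hsdiff : S \ (B e).image Prod.fst = S \ U := by
    rw [← insert_erase hie, sdiff_insert, erase_eq_of_notMem fun h => hi (mem_sdiff.1 h).1]
  rw [← div_eq_mul_inv, le_div_iff₀ (by positivity), ← hUcard]
  refine le_trans ?_ (card_goodChoices_sdiff_mul_pow_le hβ hUS hgrow)
  rw [← hsdiff]
  exact mul_le_mul_of_nonneg_right (Nat.cast_le.2 (card_violatingChoices_le hi hie)) (by positivity)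

lemma mul_card_goodChoices_le (hβ : 0 < β) {T : Finset I}
    (hL : ∀ i ∈ T, β + ∑ e ∈ E with i ∈ (B e).image Prod.fst, (β ^ (#(B e) - 1))⁻¹ ≤ #(L i))
    (hS : S ⊆ T) (hiT : i ∈ T) (hi : i ∉ S) :
    β * #(goodChoices L E B a₀ S) ≤ #(goodChoices L E B a₀ (insert i S)) := by
  classical
  induction S using Finset.strongInduction generalizing i with
  | H S ih =>
    have hgrow : ∀ R ⊂ S, ∀ j ∈ S \ R,
        β * #(goodChoices L E B a₀ R) ≤ #(goodChoices L E B a₀ (insert j R)) := fun R hR j hj =>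
      ih R hR (hR.subset.trans hS) (hS (mem_sdiff.1 hj).1) (mem_sdiff.1 hj).2
    have hcount : #(goodChoices L E B a₀ S) * #(L i) ≤ #(goodChoices L E B a₀ (insert i S)) +
        ∑ e ∈ E with i ∈ (B e).image Prod.fst, #(violatingChoices L E B a₀ S i e) :=
      calc #(goodChoices L E B a₀ S) * #(L i)
          = #(extendedChoices L E B a₀ S i) := (card_extendedChoices hi).symm
        _ ≤ _ := card_le_card (extendedChoices_subset hi)
        _ ≤ _ := card_union_le _ _
        _ ≤ _ := by gcongr; exact card_biUnion_le
    have hviol : ∑ e ∈ E with i ∈ (B e).image Prod.fst, (#(violatingChoices L E B a₀ S i e) : ℝ) ≤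
        #(goodChoices L E B a₀ S) *
          ∑ e ∈ E with i ∈ (B e).image Prod.fst, (β ^ (#(B e) - 1))⁻¹ := by
      rw [mul_sum]
      exact sum_le_sum fun e he => card_violatingChoices_le_mul hβ hi (mem_filter.1 he).2 hgrow
    have hcount' : (#(goodChoices L E B a₀ S) : ℝ) * #(L i) ≤
        #(goodChoices L E B a₀ (insert i S)) +
          ∑ e ∈ E with i ∈ (B e).image Prod.fst, (#(violatingChoices L E B a₀ S i e) : ℝ) := by
      exact_mod_cast hcount
    have hcard : (0 : ℝ) ≤ #(goodChoices L E B a₀ S) := Nat.cast_nonneg _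
    linarith [mul_le_mul_of_nonneg_left (hL i hiT) hcard]

end CountingLemma

section ChoiceAvoiding

variable {I A ε : Type*} [Finite I] [DecidableEq I] [Nonempty A] {L : I → Finset A} {β : ℝ}
  {T : Finset I}

theorem exists_choice_avoiding {E : Finset ε} {B : ε → Finset (I × A)} (hβ : 0 < β)
    (hB : ∀ e ∈ E, (B e).Nonempty)
    (hL : ∀ i ∈ T, β + ∑ e ∈ E with i ∈ (B e).image Prod.fst, (β ^ (#(B e) - 1))⁻¹ ≤ #(L i)) :
    ∃ σ : I → A, (∀ i ∈ T, σ i ∈ L i) ∧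
      ∀ e ∈ E, (∀ p ∈ B e, p.1 ∈ T) → ∃ p ∈ B e, σ p.1 ≠ p.2 := by
  classical
  have := Fintype.ofFinite I
  have a₀ : A := Classical.arbitrary A
  have good_nonempty : ∀ S ⊆ T, 0 < #(goodChoices L E B a₀ S) := fun S hS => by
    induction S using Finset.induction_on with
    | empty =>
      refine card_pos.2 ⟨fun _ => a₀, mem_goodChoices.2 ⟨by simp, by simp, fun e he hBe => ?_⟩⟩
      obtain ⟨p, hp⟩ := hB e he
      exact absurd (hBe p hp) (notMem_empty _)
    | insert i S hi ih =>
      obtain ⟨hiT, hST⟩ := insert_subset_iff.1 hS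
      have hpos : (0 : ℝ) < β * #(goodChoices L E B a₀ S) :=
        mul_pos hβ (Nat.cast_pos.2 (ih hST))
      exact_mod_cast hpos.trans_le (mul_card_goodChoices_le hβ hL hST hiT hi)
  obtain ⟨σ, hσ⟩ := card_pos.1 (good_nonempty T Subset.rfl)
  rw [mem_goodChoices] at hσ
  exact ⟨σ, hσ.1, hσ.2.2⟩

theorem exists_choice_avoiding_classes {J : Type*} [Fintype J]
    {Q : J → Finset (Finset (I × A))} {k : J → ℕ} {N : J → I → ℕ} (hβ : 0 < β)
    (hQ : ∀ j, ∀ b ∈ Q j, #b = k j + 1)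
    (hN : ∀ j, ∀ i ∈ T, #{b ∈ Q j | i ∈ b.image Prod.fst} ≤ N j i)
    (hL : ∀ i ∈ T, β + ∑ j, N j i / β ^ k j ≤ #(L i)) :
    ∃ σ : I → A, (∀ i ∈ T, σ i ∈ L i) ∧
      ∀ j, ∀ b ∈ Q j, (∀ p ∈ b, p.1 ∈ T) → ∃ p ∈ b, σ p.1 ≠ p.2 := by
  classical
  have hsum : ∀ i ∈ T, ∑ e ∈ univ.sigma Q with i ∈ e.2.image Prod.fst, (β ^ (#e.2 - 1))⁻¹ ≤
      ∑ j, N j i / β ^ k j := fun i hi => by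
    rw [sum_filter, sum_sigma]
    refine sum_le_sum fun j _ => ?_
    calc ∑ b ∈ Q j, (if i ∈ b.image Prod.fst then (β ^ (#b - 1))⁻¹ else 0)
        = ∑ b ∈ Q j with i ∈ b.image Prod.fst, (β ^ k j)⁻¹ := by
          rw [sum_filter]
          exact sum_congr rfl fun b hb => by rw [hQ j b hb, Nat.add_sub_cancel]
      _ = #{b ∈ Q j | i ∈ b.image Prod.fst} / β ^ k j := by
          rw [sum_const, nsmul_eq_mul, div_eq_mul_inv]
      _ ≤ N j i / β ^ k j := by
          gcongr
          exact hN j i hi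
  obtain ⟨σ, hσL, hσ⟩ := exists_choice_avoiding (E := univ.sigma Q) (B := Sigma.snd) hβ
    (fun e he => card_pos.1 (hQ _ _ (mem_sigma.1 he).2 ▸ Nat.succ_pos _))
    fun i hi => (add_le_add_right (hsum i hi) β).trans (hL i hi)
  exact ⟨σ, hσL, fun j b hb => hσ ⟨j, b⟩ (mem_sigma.2 ⟨mem_univ j, hb⟩)⟩

end ChoiceAvoiding

/-! ### Picking edges at big vertices -/

section Picks

variable {V : Type*} {G : SimpleGraph V} {c : Sym2 V → ℕ} {big : V → Prop} {g : V → V}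

lemma eq_of_color_eq (hc : ProperEdgeColoring G c) {u w w' : V} (hw : G.Adj u w)
    (hw' : G.Adj u w') (h : c s(u, w) = c s(u, w')) : w = w' := by
  by_contra hne
  exact hc s(u, w) hw s(u, w') hw' (fun heq => hne (Sym2.congr_right.1 heq))
    ⟨u, Sym2.mem_mk_left _ _, Sym2.mem_mk_left _ _⟩ h

open scoped Classical in
/-- The neighbour of `u` along the edge of colour `n`, or `u` itself if there is none. -/
noncomputable def colorNeighbor (G : SimpleGraph V) (c : Sym2 V → ℕ) (u : V) (n : ℕ) : V :=
  if h : ∃ w, G.Adj u w ∧ c s(u, w) = n then h.choose else u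

lemma colorNeighbor_color (hc : ProperEdgeColoring G c) {u w : V} (hw : G.Adj u w) :
    colorNeighbor G c u (c s(u, w)) = w := by
  have hex : ∃ w', G.Adj u w' ∧ c s(u, w') = c s(u, w) := ⟨w, hw, rfl⟩
  rw [colorNeighbor, dif_pos hex]
  exact eq_of_color_eq hc hex.choose_spec.1 hw hex.choose_spec.2

/-- The pick `z → t` is an edge at `v` having the colour of the edge `uw`: picking both `uw` and
`zt` removes this colour from the colour sets of both `u` and `v`. -/
def Mirrors (G : SimpleGraph V) (c : Sym2 V → ℕ) (u v w z t : V) : Prop :=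
  G.Adj u w ∧ G.Adj z t ∧ z ≠ u ∧ (z = v ∨ t = v) ∧ c s(z, t) = c s(u, w)

/-- The two orientations of the edge at `v` having the colour of `uw`. -/
noncomputable def mirrorDart (G : SimpleGraph V) (c : Sym2 V → ℕ) (u v w : V) (o : Bool) : V × V :=
  bif o then (v, colorNeighbor G c v (c s(u, w))) else (colorNeighbor G c v (c s(u, w)), v)

lemma Mirrors.exists_mirrorDart_eq (hc : ProperEdgeColoring G c) {u v w z t : V}
    (h : Mirrors G c u v w z t) : ∃ o, mirrorDart G c u v w o = (z, t) := by
  obtain ⟨-, hzt, -, rfl | rfl, hcolor⟩ := h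
  · exact ⟨true, by rw [mirrorDart, ← hcolor, colorNeighbor_color hc hzt, cond_true]⟩
  · rw [Sym2.eq_swap] at hcolor
    exact ⟨false, by rw [mirrorDart, ← hcolor, colorNeighbor_color hc hzt.symm, cond_false]⟩

lemma Mirrors.exists_endpoint_eq {u v w z t : V} (h : Mirrors G c u v w z t) :
    ∃ o : Bool, (bif o then z else t) = v := by
  obtain ⟨-, -, -, rfl | rfl, -⟩ := h
  exacts [⟨true, rfl⟩, ⟨false, rfl⟩]

lemma Mirrors.colorNeighbor_eq (hc : ProperEdgeColoring G c) {u v w z t : V}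
    (h : Mirrors G c u v w z t) : colorNeighbor G c u (c s(z, t)) = w := by
  rw [h.2.2.2.2, colorNeighbor_color hc h.1]

open scoped Classical in
/-- The neighbours `w` of `u` such that the colour of `uw` appears on no edge at `v` other than
`uv`. -/
noncomputable def fresh [Fintype V] (G : SimpleGraph V) (c : Sym2 V → ℕ) (u v : V) : Finset V :=
  {w | G.Adj u w ∧ ∀ x, G.Adj v x → x ≠ u → c s(v, x) ≠ c s(u, w)}

lemma exists_enumeration {α β : Type*} [Nonempty β] (s : α → Finset β) (n : ℕ) :
    ∃ f : α → Fin n → β, ∀ a, #(s a) ≤ n → ∀ b ∈ s a, ∃ k, f a k = b := by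
  classical
  refine ⟨fun a k => if h : k.1 < #(s a) then ((s a).equivFin.symm ⟨k, h⟩).1
    else Classical.arbitrary β, fun a ha b hb => ?_⟩
  refine ⟨⟨(s a).equivFin ⟨b, hb⟩, (Fin.isLt _).trans_le ha⟩, ?_⟩
  simp

lemma card_le_of_forall_exists_eq {α β : Type*} [Fintype α] {s : Finset β} (f : α → β)
    (h : ∀ b ∈ s, ∃ a, f a = b) : #s ≤ Fintype.card α :=
  card_le_card_of_surjOn (s := univ) f fun b hb =>
    let ⟨a, ha⟩ := h b hb
    ⟨a, mem_coe.2 (mem_univ a), ha⟩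

lemma exists_neighbor_enumeration [Fintype V] [DecidableRel G.Adj] [Nonempty V] {Δ : ℕ}
    (hdeg : ∀ v, G.degree v ≤ Δ) :
    ∃ nb : V → Fin Δ → V, ∀ u w, G.Adj u w → ∃ k, nb u k = w := by
  obtain ⟨nb, hnb⟩ := exists_enumeration (fun u => G.neighborFinset u) Δ
  exact ⟨nb, fun u w h => hnb u (hdeg u) w ((G.mem_neighborFinset u w).2 h)⟩

variable [DecidableEq V]

/-- Every vertex `y` makes two picks, the `j`-th pick being the vertex `w` for `((y, j), w) ∈ b`.
The pattern `b` is a repeat if both picks at a vertex agree. -/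
def IsRepeat (G : SimpleGraph V) (b : Finset ((V × Bool) × V)) : Prop :=
  ∃ y w, G.Adj y w ∧ b = {((y, false), w), ((y, true), w)}

/-- The neighbours `g u` and `g v` of a fragile edge `uv` pick `u` and `v`. -/
def IsFragileClash (G : SimpleGraph V) (big : V → Prop) (g : V → V)
    (b : Finset ((V × Bool) × V)) : Prop :=
  ∃ u v j j', Fragile G big u v ∧ G.Adj (g u) u ∧ G.Adj (g v) v ∧
    b = {((g u, j), u), ((g v, j'), v)}

/-- Both picks at `u` are fresh with respect to the neighbour `v`. Only pairs with at most `17`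
fresh neighbours matter: at most `16` edges at `u` are picked, so otherwise `u` keeps a colour that
is absent from `v`. -/
def IsFreshFresh [Fintype V] (G : SimpleGraph V) (c : Sym2 V → ℕ)
    (b : Finset ((V × Bool) × V)) : Prop :=
  ∃ u v j w w', G.Adj u v ∧ #(fresh G c u v) ≤ 17 ∧ w ∈ fresh G c u v ∧ w' ∈ fresh G c u v ∧
    b = {((u, j), w), ((u, !j), w')}

/-- With respect to the neighbour `v`, one pick at `u` is fresh and the other is mirrored. -/
def IsFreshMirrored [Fintype V] (G : SimpleGraph V) (c : Sym2 V → ℕ)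
    (b : Finset ((V × Bool) × V)) : Prop :=
  ∃ u v j w w' z a t, G.Adj u v ∧ #(fresh G c u v) ≤ 17 ∧ w ∈ fresh G c u v ∧
    Mirrors G c u v w' z t ∧ b = {((u, j), w), ((u, !j), w'), ((z, a), t)}

/-- With respect to the neighbour `v`, both picks at `u` are mirrored. -/
def IsMirroredMirrored (G : SimpleGraph V) (c : Sym2 V → ℕ) (b : Finset ((V × Bool) × V)) : Prop :=
  ∃ u v j w w' z a t z' a' t', G.Adj u v ∧ Mirrors G c u v w z t ∧ Mirrors G c u v w' z' t' ∧
    b = {((u, j), w), ((u, !j), w'), ((z, a), t), ((z', a'), t')}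

/-- All picks in the pattern hit the same vertex `w`. -/
def IsOverload (G : SimpleGraph V) (b : Finset ((V × Bool) × V)) : Prop :=
  ∃ w, ∀ q ∈ b, q.2 = w ∧ G.Adj q.1.1 w

variable {i : V × Bool}

lemma IsMirroredMirrored.exists_of_mem {b : Finset ((V × Bool) × V)}
    (hb : IsMirroredMirrored G c b) (hi : i ∈ b.image Prod.fst) :
    ∃ u v j w w' z a t z' a' t', G.Adj u v ∧ Mirrors G c u v w z t ∧ Mirrors G c u v w' z' t' ∧
      b = {((u, j), w), ((u, !j), w'), ((z, a), t), ((z', a'), t')} ∧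
      (i.1 = u ∨ i = (z, a)) := by
  obtain ⟨u, v, j, w, w', z, a, t, z', a', t', huv, hmirror, hmirror', rfl⟩ := hb
  have hi : (i.1 = u ∨ i = (z, a)) ∨ i = (z', a') := by
    simp only [image_insert, image_singleton, mem_insert, mem_singleton] at hi
    rcases hi with rfl | rfl | rfl | rfl <;> simp
  rcases hi with hi | hi
  · exact ⟨u, v, j, w, w', z, a, t, z', a', t', huv, hmirror, hmirror', rfl, hi⟩
  · refine ⟨u, v, !j, w', w, z', a', t', z, a, t, huv, hmirror', hmirror, ?_, Or.inr hi⟩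
    rw [Bool.not_not, insert_comm, pair_comm ((z, a), t)]

variable [Fintype V] [DecidableRel G.Adj] {Δ : ℕ} {F : Finset (Finset ((V × Bool) × V))}

lemma card_repeat_le (hdeg : ∀ v, G.degree v ≤ Δ)
    (hF : ∀ b ∈ F, IsRepeat G b ∧ i ∈ b.image Prod.fst) : #F ≤ Δ := by
  have : Nonempty V := ⟨i.1⟩
  obtain ⟨nb, hnb⟩ := exists_neighbor_enumeration hdeg
  refine (card_le_of_forall_exists_eq (fun k : Fin Δ =>
    {((i.1, false), nb i.1 k), ((i.1, true), nb i.1 k)}) fun b hb => ?_).trans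
    (Fintype.card_fin Δ).le
  obtain ⟨⟨y, w, hyw, rfl⟩, hi⟩ := hF b hb
  obtain rfl : i.1 = y := by
    simp only [image_insert, image_singleton, mem_insert, mem_singleton] at hi
    rcases hi with rfl | rfl <;> rfl
  obtain ⟨k, rfl⟩ := hnb _ _ hyw
  exact ⟨k, rfl⟩

lemma card_fragileClash_le (hdeg : ∀ v, G.degree v ≤ Δ)
    (hF : ∀ b ∈ F, IsFragileClash G big g b ∧ i ∈ b.image Prod.fst) : #F ≤ 2 * Δ := by
  have : Nonempty V := ⟨i.1⟩
  obtain ⟨nb, hnb⟩ := exists_neighbor_enumeration hdeg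
  refine (card_le_of_forall_exists_eq (fun k : Fin Δ × Bool =>
    let u := nb i.1 k.1
    {(i, u), ((g (partner G big u), k.2), partner G big u)}) fun b hb => ?_).trans
    (by simp [mul_comm])
  obtain ⟨⟨u, v, j, j', huv, hu, hv, rfl⟩, hi⟩ := hF b hb
  simp only [image_insert, image_singleton, mem_insert, mem_singleton] at hi
  rcases hi with rfl | rfl
  · obtain ⟨k, hk⟩ := hnb _ _ hu
    exact ⟨(k, j'), by simp only [hk, huv.partner_eq]⟩
  · obtain ⟨k, hk⟩ := hnb _ _ hv
    exact ⟨(k, j), by simp only [hk, huv.symm.partner_eq, pair_comm]⟩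

lemma card_freshFresh_le (hdeg : ∀ v, G.degree v ≤ Δ)
    (hF : ∀ b ∈ F, IsFreshFresh G c b ∧ i ∈ b.image Prod.fst) : #F ≤ 578 * Δ := by
  have : Nonempty V := ⟨i.1⟩
  obtain ⟨nb, hnb⟩ := exists_neighbor_enumeration hdeg
  obtain ⟨fr, hfr⟩ := exists_enumeration (fun e : V × V => fresh G c e.1 e.2) 17
  refine (card_le_of_forall_exists_eq (fun ((k, m, m', j) : Fin Δ × Fin 17 × Fin 17 × Bool) =>
    let v := nb i.1 k
    {((i.1, j), fr (i.1, v) m), ((i.1, !j), fr (i.1, v) m')}) fun b hb => ?_).trans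
    (by simp; omega)
  obtain ⟨⟨u, v, j, w, w', huv, hcard, hw, hw', rfl⟩, hi⟩ := hF b hb
  obtain rfl : i.1 = u := by
    simp only [image_insert, image_singleton, mem_insert, mem_singleton] at hi
    rcases hi with rfl | rfl <;> rfl
  obtain ⟨k, rfl⟩ := hnb _ _ huv
  obtain ⟨m, rfl⟩ := hfr (i.1, _) hcard _ hw
  obtain ⟨m', rfl⟩ := hfr (i.1, _) hcard _ hw'
  exact ⟨(k, m, m', j), rfl⟩

lemma card_freshMirrored_le (hc : ProperEdgeColoring G c) (hdeg : ∀ v, G.degree v ≤ Δ)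
    (hF : ∀ b ∈ F, IsFreshMirrored G c b ∧ i ∈ b.image Prod.fst) : #F ≤ 204 * Δ ^ 2 := by
  have : Nonempty V := ⟨i.1⟩
  obtain ⟨nb, hnb⟩ := exists_neighbor_enumeration hdeg
  obtain ⟨fr, hfr⟩ := exists_enumeration (fun e : V × V => fresh G c e.1 e.2) 17
  refine (card_le_of_forall_exists_eq (Sum.elim
    (fun ((k, m, k', o, a, j) : Fin Δ × Fin 17 × Fin Δ × Bool × Bool × Bool) =>
      let v := nb i.1 k
      let w' := nb i.1 k'
      let e := mirrorDart G c i.1 v w' o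
      {((i.1, j), fr (i.1, v) m), ((i.1, !j), w'), ((e.1, a), e.2)})
    (fun ((k, o, k', m, j) : Fin Δ × Bool × Fin Δ × Fin 17 × Bool) =>
      let t := nb i.1 k
      let v := bif o then i.1 else t
      let u := nb v k'
      {((u, j), fr (u, v) m), ((u, !j), colorNeighbor G c u (c s(i.1, t))), (i, t)}))
    fun b hb => ?_).trans (by simp; ring_nf; omega)
  obtain ⟨⟨u, v, j, w, w', z, a, t, huv, hcard, hw, hmirror, rfl⟩, hi⟩ := hF b hb
  obtain ⟨m, rfl⟩ := hfr (u, v) hcard _ hw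
  have hi : i.1 = u ∨ i = (z, a) := by
    simp only [image_insert, image_singleton, mem_insert, mem_singleton] at hi
    rcases hi with rfl | rfl | rfl <;> simp
  rcases hi with rfl | rfl
  · obtain ⟨k, rfl⟩ := hnb _ _ huv
    obtain ⟨k', rfl⟩ := hnb _ _ hmirror.1
    obtain ⟨o, ho⟩ := hmirror.exists_mirrorDart_eq hc
    exact ⟨.inl (k, m, k', o, a, j), by simp only [Sum.elim_inl, ho]⟩
  · obtain ⟨k, rfl⟩ := hnb _ _ hmirror.2.1
    obtain ⟨o, rfl⟩ := hmirror.exists_endpoint_eq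
    obtain ⟨k', rfl⟩ := hnb _ _ huv.symm
    exact ⟨.inr (k, o, k', m, j), by simp only [Sum.elim_inr, hmirror.colorNeighbor_eq hc]⟩

lemma card_mirroredMirrored_le (hc : ProperEdgeColoring G c) (hdeg : ∀ v, G.degree v ≤ Δ)
    (hF : ∀ b ∈ F, IsMirroredMirrored G c b ∧ i ∈ b.image Prod.fst) : #F ≤ 64 * Δ ^ 3 := by
  have : Nonempty V := ⟨i.1⟩
  obtain ⟨nb, hnb⟩ := exists_neighbor_enumeration hdeg
  refine (card_le_of_forall_exists_eq (Sum.elim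
    (fun ((k, k', k'', o, a, o', a', j) :
        Fin Δ × Fin Δ × Fin Δ × Bool × Bool × Bool × Bool × Bool) =>
      let v := nb i.1 k
      let w := nb i.1 k'
      let w' := nb i.1 k''
      let e := mirrorDart G c i.1 v w o
      let e' := mirrorDart G c i.1 v w' o'
      {((i.1, j), w), ((i.1, !j), w'), ((e.1, a), e.2), ((e'.1, a'), e'.2)})
    (fun ((k, o, k', k'', o', a', j) : Fin Δ × Bool × Fin Δ × Fin Δ × Bool × Bool × Bool) =>
      let t := nb i.1 k
      let v := bif o then i.1 else t
      let u := nb v k'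
      let w' := nb u k''
      let e' := mirrorDart G c u v w' o'
      {((u, j), colorNeighbor G c u (c s(i.1, t))), ((u, !j), w'), (i, t),
        ((e'.1, a'), e'.2)}))
    fun b hb => ?_).trans (by simp; ring_nf; omega)
  obtain ⟨u, v, j, w, w', z, a, t, z', a', t', huv, hmirror, hmirror', rfl, hi⟩ :=
    (hF b hb).1.exists_of_mem (hF b hb).2
  obtain ⟨o', ho'⟩ := hmirror'.exists_mirrorDart_eq hc
  rcases hi with rfl | rfl
  · obtain ⟨k, rfl⟩ := hnb _ _ huv
    obtain ⟨k', rfl⟩ := hnb _ _ hmirror.1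
    obtain ⟨k'', rfl⟩ := hnb _ _ hmirror'.1
    obtain ⟨o, ho⟩ := hmirror.exists_mirrorDart_eq hc
    exact ⟨.inl (k, k', k'', o, a, o', a', j), by simp only [Sum.elim_inl, ho, ho']⟩
  · obtain ⟨k, rfl⟩ := hnb _ _ hmirror.2.1
    obtain ⟨o, rfl⟩ := hmirror.exists_endpoint_eq
    obtain ⟨k', rfl⟩ := hnb _ _ huv.symm
    obtain ⟨k'', rfl⟩ := hnb _ _ hmirror'.1
    exact ⟨.inr (k, o, k', k'', o', a', j),
      by simp only [Sum.elim_inr, hmirror.colorNeighbor_eq hc, ho']⟩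

lemma card_overload_le (hdeg : ∀ v, G.degree v ≤ Δ)
    (hF : ∀ b ∈ F, (#b = 15 ∧ IsOverload G b) ∧ i ∈ b.image Prod.fst) :
    #F ≤ G.degree i.1 * (2 * Δ).choose 14 := by
  let hits (w : V) : Finset ((V × Bool) × V) := (G.neighborFinset w ×ˢ univ) ×ˢ {w}
  have hhits (w : V) : #(hits w) ≤ 2 * Δ := by
    have := hdeg w
    simp only [hits, card_product, SimpleGraph.card_neighborFinset_eq_degree, card_univ,
      Fintype.card_bool, card_singleton]
    omega
  have hsub : F ⊆ (G.neighborFinset i.1).biUnion fun w =>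
      ((hits w).powersetCard 14).image (insert (i, w)) := by
    intro b hb
    obtain ⟨⟨hcard, w, hw⟩, hi⟩ := hF b hb
    obtain ⟨⟨i, w'⟩, hq, rfl⟩ := mem_image.1 hi
    obtain ⟨rfl, hadj⟩ := hw _ hq
    simp only [mem_biUnion, mem_image, SimpleGraph.mem_neighborFinset]
    refine ⟨w', hadj, b.erase (i, w'), ?_, insert_erase hq⟩
    refine mem_powersetCard.2 ⟨fun q hq' => ?_, by rw [card_erase_of_mem hq, hcard]⟩
    obtain ⟨hqw, hadj'⟩ := hw q (mem_of_mem_erase hq')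
    simp only [hits, mem_product, SimpleGraph.mem_neighborFinset, mem_univ, and_true,
      mem_singleton]
    exact ⟨hadj'.symm, hqw⟩
  calc #F ≤ _ := card_le_card hsub
    _ ≤ #(G.neighborFinset i.1) * (2 * Δ).choose 14 := by
        refine card_biUnion_le_card_mul _ _ _ fun w _ => card_image_le.trans ?_
        rw [card_powersetCard]
        exact Nat.choose_le_choose _ (hhits w)
    _ = G.degree i.1 * (2 * Δ).choose 14 := by
        rw [SimpleGraph.card_neighborFinset_eq_degree]

end Picks

section GoodPicks

variable {V : Type*} {G : SimpleGraph V} {c : Sym2 V → ℕ} {big : V → Prop} {g : V → V}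

lemma sum_pattern_bound_le {Δ e : ℕ} {β : ℝ} (hβ : β = 441 / 1000 * Δ) (hΔ : 10 ^ 6 ≤ Δ)
    (he : 49 / 100 * (Δ : ℝ) ≤ e) :
    β + (Δ / β + 2 * Δ / β + 578 * Δ / β + 204 * Δ ^ 2 / β ^ 2 + 64 * Δ ^ 3 / β ^ 3 +
      e * (2 * Δ).choose 14 / β ^ 14) ≤ e := by
  have hΔ' : (10 : ℝ) ^ 6 ≤ Δ := by exact_mod_cast hΔ
  have hpos : (0 : ℝ) < Δ := lt_of_lt_of_le (by norm_num) hΔ'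
  have hlow : Δ / β + 2 * Δ / β + 578 * Δ / β + 204 * Δ ^ 2 / β ^ 2 + 64 * Δ ^ 3 / β ^ 3 ≤
      (4000 : ℝ) := by
    rw [hβ, ← sub_nonneg]
    field_simp
    norm_num
  have hchoose : ((2 * Δ).choose 14 : ℝ) / β ^ 14 ≤ 1 / 50 := by
    calc ((2 * Δ).choose 14 : ℝ) / β ^ 14
        ≤ ((2 * Δ : ℕ) : ℝ) ^ 14 / (Nat.factorial 14 : ℕ) / β ^ 14 := by
          rw [hβ]; gcongr; exact Nat.choose_le_pow_div 14 (2 * Δ)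
      _ = (2000 / 441 : ℝ) ^ 14 / (Nat.factorial 14 : ℕ) := by
          rw [hβ]; push_cast; field_simp; norm_num
      _ ≤ 1 / 50 := by norm_num [Nat.factorial]
  have hlast : (e : ℝ) * (2 * Δ).choose 14 / β ^ 14 ≤ e * (1 / 50) := by
    rw [mul_div_assoc]; gcongr
  rw [hβ] at *
  linarith

variable [DecidableEq V] [Fintype V]

/-- The six kinds of forbidden patterns of picks. -/
def IsForbidden (G : SimpleGraph V) (c : Sym2 V → ℕ) (big : V → Prop) (g : V → V) :
    Fin 6 → Finset ((V × Bool) × V) → Prop :=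
  ![IsRepeat G, IsFragileClash G big g, IsFreshFresh G c, IsFreshMirrored G c,
    IsMirroredMirrored G c, IsOverload G]

/-- A forbidden pattern of kind `j` consists of `excess j + 1` picks. -/
def excess : Fin 6 → ℕ := ![1, 1, 1, 2, 3, 14]

/-- Two picks `σ (v, false)` and `σ (v, true)` at every vertex `v`, which for big `v` are
neighbours of `v` and together form no forbidden pattern. -/
structure GoodPicks (G : SimpleGraph V) (c : Sym2 V → ℕ) (big : V → Prop) (g : V → V)
    (σ : V × Bool → V) : Prop where
  adj : ∀ i, big i.1 → G.Adj i.1 (σ i)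
  not_forbidden : ∀ j (s : Finset (V × Bool)), #s = excess j + 1 → (∀ i ∈ s, big i.1) →
    ¬IsForbidden G c big g j (s.image fun i => (i, σ i))

namespace GoodPicks

variable {σ : V × Bool → V} {u v : V}

lemma ne (hσ : GoodPicks G c big g σ) (hu : big u) (j : Bool) : σ (u, j) ≠ σ (u, !j) := by
  have hne : σ (u, false) ≠ σ (u, true) := fun heq =>
    hσ.not_forbidden 0 {(u, false), (u, true)} (card_pair (by simp)) (by simp [hu])
      ⟨u, σ (u, false), hσ.adj (u, false) hu, by simp [heq]⟩
  cases j
  exacts [hne, hne.symm]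

lemma not_fragileClash (hσ : GoodPicks G c big g σ) (huv : Fragile G big u v) (hu : big (g u))
    (hv : big (g v)) {j j' : Bool} (hju : σ (g u, j) = u) : σ (g v, j') ≠ v := fun hjv =>
  hσ.not_forbidden 1 {(g u, j), (g v, j')}
    (card_pair fun heq => huv.1.ne (hju.symm.trans ((congrArg σ heq).trans hjv)))
    (by simp [hu, hv])
    ⟨u, v, j, j', huv, by simpa only [hju] using hσ.adj (g u, j) hu,
      by simpa only [hjv] using hσ.adj (g v, j') hv, by simp [hju, hjv]⟩

lemma not_fresh_fresh (hσ : GoodPicks G c big g σ) (hu : big u) (huv : G.Adj u v)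
    (hcard : #(fresh G c u v) ≤ 17) {j : Bool} (hj : σ (u, j) ∈ fresh G c u v) :
    σ (u, !j) ∉ fresh G c u v := fun hj' =>
  hσ.not_forbidden 2 {(u, j), (u, !j)} (card_pair (by simp)) (by simp [hu])
    ⟨u, v, j, _, _, huv, hcard, hj, hj', by simp⟩

lemma not_fresh_mirrored (hσ : GoodPicks G c big g σ) (hu : big u) (huv : G.Adj u v)
    (hcard : #(fresh G c u v) ≤ 17) {j : Bool} (hj : σ (u, j) ∈ fresh G c u v) {z : V} (hz : big z)
    (a : Bool) : ¬Mirrors G c u v (σ (u, !j)) z (σ (z, a)) := fun hmirror =>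
  hσ.not_forbidden 3 {(u, j), (u, !j), (z, a)}
    (card_eq_three.2 ⟨_, _, _, by simp, by simp [hmirror.2.2.1.symm], by simp [hmirror.2.2.1.symm],
      rfl⟩)
    (by simp [hu, hz]) ⟨u, v, j, _, _, z, a, _, huv, hcard, hj, hmirror, by simp⟩

lemma not_mirrored_mirrored (hσ : GoodPicks G c big g σ) (hc : ProperEdgeColoring G c)
    (hu : big u) (huv : G.Adj u v) {j a a' : Bool} {z z' : V} (hz : big z) (hz' : big z')
    (hmirror : Mirrors G c u v (σ (u, j)) z (σ (z, a))) :
    ¬Mirrors G c u v (σ (u, !j)) z' (σ (z', a')) := fun hmirror' => by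
  have hne : (z, a) ≠ (z', a') := fun heq => by
    obtain ⟨rfl, rfl⟩ := Prod.mk.inj heq
    exact hσ.ne hu j
      (eq_of_color_eq hc hmirror.1 hmirror'.1 (hmirror.2.2.2.2.symm.trans hmirror'.2.2.2.2))
  refine hσ.not_forbidden 4 {(u, j), (u, !j), (z, a), (z', a')} ?_ (by simp [hu, hz, hz'])
    ⟨u, v, j, _, _, z, a, _, z', a', _, huv, hmirror, hmirror', by simp⟩
  rw [card_insert_of_notMem, card_insert_of_notMem, card_pair hne]
  · rfl
  all_goals simp [hmirror.2.2.1.symm, hmirror'.2.2.1.symm]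

lemma exists_unmatched (hσ : GoodPicks G c big g σ) (hc : ProperEdgeColoring G c)
    (hu : big u) (huv : G.Adj u v) (hcard : #(fresh G c u v) ≤ 17) :
    ∃ j, σ (u, j) ∉ fresh G c u v ∧
      ∀ z a, big z → ¬Mirrors G c u v (σ (u, j)) z (σ (z, a)) := by
  by_contra! hmatched
  by_cases hfresh : ∃ j, σ (u, j) ∈ fresh G c u v
  · obtain ⟨j, hj⟩ := hfresh
    obtain ⟨z, a, hz, hmirror⟩ := hmatched (!j) (hσ.not_fresh_fresh hu huv hcard hj)
    exact hσ.not_fresh_mirrored hu huv hcard hj hz a hmirror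
  · push Not at hfresh
    obtain ⟨z, a, hz, hmirror⟩ := hmatched false (hfresh false)
    obtain ⟨z', a', hz', hmirror'⟩ := hmatched true (hfresh true)
    exact hσ.not_mirrored_mirrored hc hu huv hz hz' hmirror hmirror'

lemma card_le_of_forall_eq (hσ : GoodPicks G c big g σ) {w : V} {s : Finset (V × Bool)}
    (hs : ∀ i ∈ s, big i.1 ∧ σ i = w) : #s ≤ 14 := by
  by_contra! hlt
  obtain ⟨t, hts, hcard⟩ := exists_subset_card_eq (Nat.succ_le_of_lt hlt)
  refine hσ.not_forbidden 5 t hcard (fun i hi => (hs i (hts hi)).1) ⟨w, fun q hq => ?_⟩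
  obtain ⟨i, hi, rfl⟩ := mem_image.1 hq
  obtain ⟨hi, rfl⟩ := hs i (hts hi)
  exact ⟨rfl, hσ.adj i hi⟩

end GoodPicks

variable [DecidableRel G.Adj] {Δ : ℕ}

lemma card_forbidden_le (hc : ProperEdgeColoring G c) (hdeg : ∀ v, G.degree v ≤ Δ) {i : V × Bool}
    {F : Finset (Finset ((V × Bool) × V))} (j : Fin 6)
    (hF : ∀ b ∈ F, (#b = excess j + 1 ∧ IsForbidden G c big g j b) ∧ i ∈ b.image Prod.fst) :
    #F ≤ ![Δ, 2 * Δ, 578 * Δ, 204 * Δ ^ 2, 64 * Δ ^ 3, G.degree i.1 * (2 * Δ).choose 14] j := by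
  have hF' : ∀ b ∈ F, IsForbidden G c big g j b ∧ i ∈ b.image Prod.fst :=
    fun b hb => ⟨(hF b hb).1.2, (hF b hb).2⟩
  fin_cases j
  exacts [card_repeat_le hdeg hF', card_fragileClash_le hdeg hF', card_freshFresh_le hdeg hF',
    card_freshMirrored_le hc hdeg hF', card_mirroredMirrored_le hc hdeg hF',
    card_overload_le hdeg hF]

lemma exists_goodPicks (hdeg : ∀ v, G.degree v ≤ Δ) (hΔ : 10 ^ 6 ≤ Δ)
    (hbig : ∀ v, big v → 49 / 100 * (Δ : ℝ) ≤ G.degree v) (hc : ProperEdgeColoring G c)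
    (g : V → V) :
    ∃ σ, GoodPicks G c big g σ := by
  classical
  rcases isEmpty_or_nonempty V with _ | _
  · exact ⟨Prod.fst, isEmptyElim, fun j s hs => by simp [s.eq_empty_of_isEmpty] at hs⟩
  have : (0 : ℝ) < Δ := by exact_mod_cast (by omega : 0 < Δ)
  obtain ⟨σ, hadj, hσ⟩ := exists_choice_avoiding_classes (β := 441 / 1000 * (Δ : ℝ))
    (L := fun i : V × Bool => G.neighborFinset i.1) (T := {i | big i.1})
    (Q := fun j => {b | #b = excess j + 1 ∧ IsForbidden G c big g j b}) (k := excess)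
    (N := fun j i => ![Δ, 2 * Δ, 578 * Δ, 204 * Δ ^ 2, 64 * Δ ^ 3,
      G.degree i.1 * (2 * Δ).choose 14] j)
    (by positivity) (fun j b hb => (mem_filter.1 hb).2.1)
    (fun j i _ => card_forbidden_le hc hdeg j fun b hb => by
      simpa only [mem_filter, mem_univ, true_and] using hb)
    (fun i hi => by
      rw [SimpleGraph.card_neighborFinset_eq_degree, Fin.sum_univ_six]
      simpa [excess] using sum_pattern_bound_le rfl hΔ (hbig i.1 (mem_filter.1 hi).2))
  refine ⟨σ, fun i hi => ?_, fun j s hcard hs hforbidden => ?_⟩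
  · exact (G.mem_neighborFinset _ _).1 (hadj i (mem_filter.2 ⟨mem_univ i, hi⟩))
  · have himage : #(s.image fun i => (i, σ i)) = excess j + 1 := by
      rw [card_image_of_injective _ fun _ _ h => (Prod.mk.inj h).1, hcard]
    obtain ⟨p, hp, hne⟩ := hσ j _ (mem_filter.2 ⟨mem_univ _, himage, hforbidden⟩) fun p hp => by
      obtain ⟨i, hi, rfl⟩ := mem_image.1 hp
      exact mem_filter.2 ⟨mem_univ i, hs i hi⟩
    obtain ⟨i, -, rfl⟩ := mem_image.1 hp
    exact hne rfl

end GoodPicks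

/-! ### Recolouring the picked edges -/

section Overlay

variable {V : Type*} {G : SimpleGraph V} {c c' : Sym2 V → ℕ} {F : Finset (Sym2 V)} {N : ℕ}
  {u v : V}

lemma degree_eq_of_colorSet_eq [Fintype V] [DecidableRel G.Adj] (hc : ProperEdgeColoring G c)
    (h : colorSet G c u = colorSet G c v) : G.degree u = G.degree v := by
  have hcard : ∀ w, (colorSet G c w).ncard = G.degree w := fun w => by
    have himage : colorSet G c w = (fun x => c s(w, x)) '' G.neighborFinset w := by
      ext n
      simp [colorSet]
    have hinj : Set.InjOn (fun x => c s(w, x)) (G.neighborFinset w) := fun x hx y hy hxy =>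
      eq_of_color_eq hc (by simpa using hx) (by simpa using hy) hxy
    rw [himage, hinj.ncard_image, Set.ncard_coe_finset, SimpleGraph.card_neighborFinset_eq_degree]
  rw [← hcard u, ← hcard v, h]

lemma colorSet_deleteEdges_ne_of_separated (hc : ProperEdgeColoring G c)
    (huv : G.Adj u v)
    (hsep : ∀ x y, G.Adj u x → x ≠ v → G.Adj v y → y ≠ u → c s(u, x) ≠ c s(v, y))
    {x : V} (hux : G.Adj u x) (hxv : x ≠ v) (hx : s(u, x) ∉ F) :
    colorSet (G.deleteEdges F) c u ≠ colorSet (G.deleteEdges F) c v := fun heq => by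
  obtain ⟨y, hvy, hy⟩ := heq.subset ⟨x, SimpleGraph.deleteEdges_adj.2 ⟨hux, hx⟩, rfl⟩
  have hvy := (SimpleGraph.deleteEdges_adj.1 hvy).1
  refine hsep x y hux hxv hvy ?_ hy.symm
  rintro rfl
  rw [Sym2.eq_swap] at hy
  exact hxv (eq_of_color_eq hc huv hux hy).symm

open scoped Classical in
/-- The colouring `c` with the edges in `F` recoloured by `c'`, whose colours are shifted by `N`
in order to be new. -/
noncomputable def overlay (N : ℕ) (F : Finset (Sym2 V)) (c c' : Sym2 V → ℕ) (e : Sym2 V) : ℕ :=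
  if e ∈ F then N + c' e else c e

lemma properEdgeColoring_overlay (hc : ProperEdgeColoring G c) (hN : ∀ e, c e < N)
    (hc' : ∀ e₁ ∈ F, ∀ e₂ ∈ F, c' e₁ = c' e₂ → ∀ x, x ∈ e₁ → x ∈ e₂ → e₁ = e₂) :
    ProperEdgeColoring G (overlay N F c c') := by
  rintro e₁ he₁ e₂ he₂ hne ⟨x, hx₁, hx₂⟩ heq
  have := hN e₁
  have := hN e₂
  unfold overlay at heq
  split_ifs at heq with h₁ h₂ h₂
  · exact hne (hc' e₁ h₁ e₂ h₂ (by omega) x hx₁ hx₂)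
  · omega
  · omega
  · exact hc e₁ he₁ e₂ he₂ hne ⟨x, hx₁, hx₂⟩ heq

lemma colorSet_overlay_inter_Iio (hN : ∀ e, c e < N) (u : V) :
    colorSet G (overlay N F c c') u ∩ Set.Iio N = colorSet (G.deleteEdges F) c u := by
  ext n
  constructor
  · rintro ⟨⟨w, huw, rfl⟩, hlt⟩
    have hw : s(u, w) ∉ F := fun hw => by
      rw [Set.mem_Iio, overlay, if_pos hw] at hlt
      omega
    exact ⟨w, SimpleGraph.deleteEdges_adj.2 ⟨huw, hw⟩, (if_neg hw).symm⟩
  · rintro ⟨w, huw, rfl⟩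
    obtain ⟨huw, hw⟩ := SimpleGraph.deleteEdges_adj.1 huw
    exact ⟨⟨w, huw, if_neg hw⟩, hN _⟩

lemma colorSet_overlay_ne (hN : ∀ e, c e < N)
    (h : colorSet (G.deleteEdges F) c u ≠ colorSet (G.deleteEdges F) c v) :
    colorSet G (overlay N F c c') u ≠ colorSet G (overlay N F c c') v := fun heq =>
  h (by rw [← colorSet_overlay_inter_Iio hN, heq, colorSet_overlay_inter_Iio hN])

end Overlay

section PickedEdges

variable {V : Type*} [Fintype V] {G : SimpleGraph V} {c : Sym2 V → ℕ} {big : V → Prop}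
  {g : V → V} {σ : V × Bool → V} {u v w x : V}

open scoped Classical in
/-- The edges picked by the big vertices. -/
noncomputable def pickedEdges (big : V → Prop) (σ : V × Bool → V) : Finset (Sym2 V) :=
  {e | ∃ i : V × Bool, big i.1 ∧ s(i.1, σ i) = e}

lemma mem_pickedEdges {e : Sym2 V} :
    e ∈ pickedEdges big σ ↔ ∃ i : V × Bool, big i.1 ∧ s(i.1, σ i) = e := by
  simp only [pickedEdges, mem_filter, mem_univ, true_and]

lemma exists_pick_eq (hu : ¬big u) (h : s(u, x) ∈ pickedEdges big σ) :
    big x ∧ ∃ j, σ (x, j) = u := by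
  obtain ⟨⟨z, j⟩, hz, heq⟩ := mem_pickedEdges.1 h
  rcases Sym2.eq_iff.1 heq with ⟨rfl, -⟩ | ⟨rfl, hj⟩
  exacts [absurd hz hu, ⟨hz, j, hj⟩]

variable [DecidableEq V]

lemma card_picked_incident_le (hσ : GoodPicks G c big g σ) (x : V) :
    #{e ∈ pickedEdges big σ | x ∈ e} ≤ 16 := by
  classical
  have hsub : {e ∈ pickedEdges big σ | x ∈ e} ⊆
      ({(x, false), (x, true)} ∪ univ.filter fun i => big i.1 ∧ σ i = x).image
        fun i => s(i.1, σ i) := fun e he => by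
    obtain ⟨he, hx⟩ := mem_filter.1 he
    obtain ⟨⟨z, j⟩, hz, rfl⟩ := mem_pickedEdges.1 he
    refine mem_image_of_mem _ (mem_union.2 ?_)
    rcases Sym2.mem_iff.1 hx with rfl | rfl
    · cases j <;> simp
    · simp [hz]
  calc _ ≤ _ := (card_le_card hsub).trans card_image_le
    _ ≤ _ := card_union_le _ _
    _ ≤ 2 + 14 := add_le_add card_le_two (hσ.card_le_of_forall_eq fun i hi => (mem_filter.1 hi).2)

lemma exists_coloring_pickedEdges (hσ : GoodPicks G c big g σ) :
    ∃ c' : Sym2 V → Fin 17, ∀ e₁ ∈ pickedEdges big σ, ∀ e₂ ∈ pickedEdges big σ,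
      c' e₁ = c' e₂ → ∀ x, x ∈ e₁ → x ∈ e₂ → e₁ = e₂ := by
  refine exists_edgeColoring_of_card_le (ends := id) (D := 16) (μ := 1) (fun e he => ?_)
    (card_picked_incident_le hσ) (fun p => ?_) (by simp)
  · obtain ⟨i, hi, rfl⟩ := mem_pickedEdges.1 he
    exact (hσ.adj i hi).ne
  · exact card_le_one.2 fun a ha b hb => (mem_filter.1 ha).2.trans (mem_filter.1 hb).2.symm

lemma card_fresh_le (hc : ProperEdgeColoring G c) (hσ : GoodPicks G c big g σ) (huv : G.Adj u v)
    (heq : colorSet (G.deleteEdges (pickedEdges big σ)) c u =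
      colorSet (G.deleteEdges (pickedEdges big σ)) c v) : #(fresh G c u v) ≤ 17 := by
  have hpicked : ∀ w ∈ (fresh G c u v).erase v, s(u, w) ∈ pickedEdges big σ := fun w hw => by
    by_contra hnot
    simp only [fresh, mem_erase, mem_filter, mem_univ, true_and] at hw
    obtain ⟨hwv, huw, hw⟩ := hw
    obtain ⟨x, hvx, hx⟩ := heq.subset ⟨w, SimpleGraph.deleteEdges_adj.2 ⟨huw, hnot⟩, rfl⟩
    refine hw x (SimpleGraph.deleteEdges_adj.1 hvx).1 ?_ hx
    rintro rfl
    rw [Sym2.eq_swap] at hx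
    exact hwv (eq_of_color_eq hc huv huw hx).symm
  have herase : #((fresh G c u v).erase v) ≤ 16 :=
    (card_le_card_of_injOn (s(u, ·)) (fun w hw => mem_coe.2 (mem_filter.2
      ⟨hpicked w hw, Sym2.mem_mk_left u w⟩)) fun _ _ _ _ h => Sym2.congr_right.1 h).trans
      (card_picked_incident_le hσ u)
  have := pred_card_le_card_erase (s := fresh G c u v) (a := v)
  omega

lemma exists_mirrors (hc : ProperEdgeColoring G c) (hσ : GoodPicks G c big g σ)
    (huv : G.Adj u v)
    (heq : colorSet (G.deleteEdges (pickedEdges big σ)) c u =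
      colorSet (G.deleteEdges (pickedEdges big σ)) c v)
    (huw : G.Adj u w) (hw : s(u, w) ∈ pickedEdges big σ) (hfresh : w ∉ fresh G c u v) :
    ∃ z a, big z ∧ Mirrors G c u v w z (σ (z, a)) := by
  obtain ⟨x, hvx, hxu, hx⟩ : ∃ x, G.Adj v x ∧ x ≠ u ∧ c s(v, x) = c s(u, w) := by
    simpa [fresh, huw] using hfresh
  have hpicked : s(v, x) ∈ pickedEdges big σ := by
    by_contra hnot
    obtain ⟨w', huw', hw'⟩ := heq.superset ⟨x, SimpleGraph.deleteEdges_adj.2 ⟨hvx, hnot⟩, rfl⟩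
    obtain ⟨huw', hnot'⟩ := SimpleGraph.deleteEdges_adj.1 huw'
    rw [eq_of_color_eq hc huw' huw (hw'.trans hx)] at hnot'
    exact hnot' hw
  obtain ⟨⟨z, a⟩, hz, hza⟩ := mem_pickedEdges.1 hpicked
  refine ⟨z, a, hz, huw, hσ.adj (z, a) hz, ?_, ?_, by rw [hza, hx]⟩
  · rintro rfl
    rcases Sym2.eq_iff.1 hza with ⟨h, -⟩ | ⟨h, -⟩
    exacts [huv.ne h, hxu h.symm]
  · exact (Sym2.eq_iff.1 hza).imp And.left And.right

lemma colorSet_deleteEdges_ne_of_big (hc : ProperEdgeColoring G c)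
    (hσ : GoodPicks G c big g σ) (hu : big u) (huv : G.Adj u v) :
    colorSet (G.deleteEdges (pickedEdges big σ)) c u ≠
      colorSet (G.deleteEdges (pickedEdges big σ)) c v := fun heq => by
  obtain ⟨j, hj, hmirrors⟩ := hσ.exists_unmatched hc hu huv (card_fresh_le hc hσ huv heq)
  obtain ⟨z, a, hz, hmirror⟩ := exists_mirrors hc hσ huv heq (hσ.adj (u, j) hu)
    (mem_pickedEdges.2 ⟨(u, j), hu, rfl⟩) hj
  exact hmirrors z a hz hmirror

lemma colorSet_deleteEdges_ne_of_fragile (hc : ProperEdgeColoring G c)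
    (hσ : GoodPicks G c big g σ) (huv : Fragile G big u v)
    (hsep : ∀ x y, G.Adj u x → x ≠ v → G.Adj v y → y ≠ u → c s(u, x) ≠ c s(v, y))
    (hu : G.Adj u (g u) ∧ g u ≠ v) (hv : G.Adj v (g v) ∧ g v ≠ u) :
    colorSet (G.deleteEdges (pickedEdges big σ)) c u ≠
      colorSet (G.deleteEdges (pickedEdges big σ)) c v := by
  by_cases hgu : s(u, g u) ∈ pickedEdges big σ
  · have hgv : s(v, g v) ∉ pickedEdges big σ := fun hgv => by
      obtain ⟨hbu, j, hj⟩ := exists_pick_eq huv.2.1 hgu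
      obtain ⟨hbv, j', hj'⟩ := exists_pick_eq huv.2.2.1 hgv
      exact hσ.not_fragileClash huv hbu hbv hj hj'
    exact (colorSet_deleteEdges_ne_of_separated hc huv.1.symm
      (fun x y hx hxu hy hyv => (hsep y x hy hyv hx hxu).symm) hv.1 hv.2 hgv).symm
  · exact colorSet_deleteEdges_ne_of_separated hc huv.1 hsep hu.1 hu.2 hgu

end PickedEdges

section Main

variable {V : Type*} [Fintype V] {G : SimpleGraph V} {big : V → Prop} [DecidableRel G.Adj] {Δ : ℕ}

theorem exists_coloring_distinguishing (hdeg : ∀ v, G.degree v ≤ Δ) (hΔ : 10 ^ 6 ≤ Δ)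
    (hbig : ∀ v, big v → 49 / 100 * (Δ : ℝ) ≤ G.degree v)
    (hsmall : ∀ v, ¬big v → 2 * G.degree v ≤ Δ) :
    ∃ c : Sym2 V → ℕ, ProperEdgeColoring G c ∧ (∀ e, c e < Δ + 19) ∧
      (∀ u v, G.Adj u v → big u → colorSet G c u ≠ colorSet G c v) ∧
      ∀ u v, Fragile G big u v → ¬(G.degree u = 1 ∧ G.degree v = 1) →
        colorSet G c u ≠ colorSet G c v := by
  classical
  obtain ⟨c, hc, hN, hsep⟩ := exists_coloring_separating_fragile (big := big) hdeg hsmall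
  have houter : ∀ u, ∃ x, 1 < G.degree u → G.Adj u x ∧ x ≠ partner G big u := fun u => by
    by_cases hu : 1 < G.degree u
    · obtain ⟨x, hx, hne⟩ := exists_mem_ne hu (partner G big u)
      exact ⟨x, fun _ => ⟨(G.mem_neighborFinset u x).1 hx, hne⟩⟩
    · exact ⟨u, fun h => absurd h hu⟩
  choose g hg using houter
  obtain ⟨σ, hσ⟩ := exists_goodPicks hdeg hΔ hbig hc g
  obtain ⟨c', hc'⟩ := exists_coloring_pickedEdges hσ
  have hproper : ProperEdgeColoring G (overlay (Δ + 2) (pickedEdges big σ) c fun e => c' e) :=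
    properEdgeColoring_overlay hc hN fun e₁ he₁ e₂ he₂ heq => hc' e₁ he₁ e₂ he₂ (Fin.ext heq)
  refine ⟨_, hproper, fun e => ?_, fun u v huv hu => ?_, fun u v huv hdeg_ne heq => ?_⟩
  · have := hN e
    have := (c' e).isLt
    dsimp only [overlay]
    split_ifs <;> omega
  · exact colorSet_overlay_ne hN (colorSet_deleteEdges_ne_of_big hc hσ hu huv)
  · have hdeg_eq := degree_eq_of_colorSet_eq hproper heq
    have hpos : 0 < G.degree u := (G.degree_pos_iff_exists_adj u).2 ⟨v, huv.1⟩
    have hu := hg u (by omega)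
    have hv := hg v (by omega)
    rw [huv.partner_eq] at hu
    rw [huv.symm.partner_eq] at hv
    exact colorSet_overlay_ne hN
      (colorSet_deleteEdges_ne_of_fragile hc hσ huv (hsep u v huv) hu hv) heq

end Main

end AVD

theorem avd_big_and_fragile_general {ε : ℝ} (hε : 0 ≤ ε) (hε' : ε ≤ 1 / 100) {Δ : ℕ}
    (hΔ : 10 ^ 6 ≤ Δ) {V : Type*} [Fintype V] (G : SimpleGraph V) [DecidableRel G.Adj]
    (hdeg : ∀ v, G.degree v ≤ Δ) :
    ∃ c : Sym2 V → ℕ, ProperEdgeColoring G c ∧ (∀ e, c e < Δ + 19) ∧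
      (∀ u v, G.Adj u v → ⌈((1 : ℝ) / 2 - ε) * Δ⌉₊ ≤ G.degree u →
        colorSet G c u ≠ colorSet G c v) ∧
      ∀ u v, G.Adj u v → ¬(G.degree u = 1 ∧ G.degree v = 1) →
        G.degree u < ⌈((1 : ℝ) / 2 - ε) * Δ⌉₊ → G.degree v < ⌈((1 : ℝ) / 2 - ε) * Δ⌉₊ →
        (∀ w, (G.Adj u w ∨ G.Adj v w) → w ≠ u → w ≠ v →
          ⌈((1 : ℝ) / 2 - ε) * Δ⌉₊ ≤ G.degree w) →
        colorSet G c u ≠ colorSet G c v := by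
  have hlow : 49 / 100 * (Δ : ℝ) ≤ (1 / 2 - ε) * Δ := by gcongr; linarith
  have hhigh : (1 / 2 - ε) * Δ ≤ 1 / 2 * (Δ : ℝ) := by gcongr; linarith
  obtain ⟨c, hc, hlt, hbig, hfragile⟩ := AVD.exists_coloring_distinguishing
    (big := fun v => ⌈((1 : ℝ) / 2 - ε) * Δ⌉₊ ≤ G.degree v) hdeg hΔ
    (fun v hv => hlow.trans (Nat.ceil_le.1 hv)) (fun v hv => by
      have hv := (Nat.lt_ceil.1 (not_le.1 hv)).le.trans hhigh
      exact_mod_cast (by linarith : 2 * (G.degree v : ℝ) ≤ Δ))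
  exact ⟨c, hc, hlt, hbig, fun u v huv hdeg_ne hu hv hother =>
    hfragile u v ⟨huv, hu.not_ge, hv.not_ge, hother⟩ hdeg_ne⟩

/-- There exist `ε ∈ (0, 1/2)` and an integer `Δ₀` such that every finite simple graph with
maximum degree `Δ ≥ Δ₀` and no isolated edge has a proper edge colouring with at most
`Δ + 19` colours distinguishing (i) every pair of adjacent big vertices (degree at least
`d := ⌈(1/2 - ε)Δ⌉`), and (ii) every pair of adjacent small vertices all of whose other
neighbours are big. -/
theorem avd_big_and_fragile :
    ∃ ε : ℝ, 0 < ε ∧ ε < 1/2 ∧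
      ∃ Δ₀ : ℤ, ∀ Δ : ℕ, Δ₀ ≤ (Δ : ℤ) →
        ∀ (V : Type) [Fintype V] [DecidableEq V] (G : SimpleGraph V) [DecidableRel G.Adj],
          G.maxDegree = Δ →
          (∀ u v : V, G.Adj u v → ¬(G.degree u = 1 ∧ G.degree v = 1)) →
          ∃ c : Sym2 V → ℕ,
            ProperEdgeColoring G c ∧
            (∀ e ∈ G.edgeSet, c e < Δ + 19) ∧
            (∀ u v : V, G.Adj u v →
              ⌈((1:ℝ)/2 - ε) * Δ⌉₊ ≤ G.degree u → ⌈((1:ℝ)/2 - ε) * Δ⌉₊ ≤ G.degree v →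
              colorSet G c u ≠ colorSet G c v) ∧
            (∀ u v : V, G.Adj u v →
              G.degree u < ⌈((1:ℝ)/2 - ε) * Δ⌉₊ → G.degree v < ⌈((1:ℝ)/2 - ε) * Δ⌉₊ →
              (∀ w : V, (G.Adj u w ∨ G.Adj v w) → w ≠ u → w ≠ v →
                ⌈((1:ℝ)/2 - ε) * Δ⌉₊ ≤ G.degree w) →
              colorSet G c u ≠ colorSet G c v) := by
  refine ⟨1 / 100, by norm_num, by norm_num, 10 ^ 6, fun Δ hΔ V _ _ G _ hmax hiso => ?_⟩
  obtain ⟨c, hc, hlt, hbig, hfragile⟩ := avd_big_and_fragile_general (ε := 1 / 100) (by norm_num)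
    le_rfl (by exact_mod_cast hΔ) G fun v => (G.degree_le_maxDegree v).trans_eq hmax
  exact ⟨c, hc, fun e _ => hlt e, fun u v huv hu _ => hbig u v huv hu,
    fun u v huv => hfragile u v huv (hiso u v huv)⟩
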